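/- Let G be a countable group, let L be a finite set, and let G act on L^G by left-shifts: (g·x)(h) = x(g⁻¹h). Let F be a G-invariant sub-σ-algebra of the Borel σ-algebra of L^G generated by a countable collection of clopen sets. Equip the set M_G(L^G) of G-invariant Borel probability measures on L^G with the weak* topology. Then the map μ ↦ rh_G(L^G, μ | F) is upper-semicontinuous on the subspace of those invariant measures that are aperiodic or ergodic; moreover, if G is finitely generated then this map is upper-semicontinuous on all of M_G(L^G). -/

import Mathlib

open MeasureTheory Set Function
open scoped ENNReal symmDiff

/-- A set in a measurable space is *analytic* if it is the image of a Borel subset of a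
standard Borel space under a Borel (measurable) map. -/
def IsAnalyticS {W : Type*} [MeasurableSpace W] (A : Set W) : Prop :=
  ∃ (Z : Type) (mZ : MeasurableSpace Z), @StandardBorelSpace Z mZ ∧
    ∃ (B : Set Z) (f : Z → W), MeasurableSet[mZ] B ∧ @Measurable Z W mZ _ f ∧ f '' B = A

/-- The smallest `G`-invariant sub-σ-algebra containing the collection `ξ`. -/
def sigmaG (G : Type*) {X : Type*} [Group G] [MulAction G X] (ξ : Set (Set X)) :
    MeasurableSpace X :=
  MeasurableSpace.generateFrom {B | ∃ (g : G), ∃ A ∈ ξ, B = (fun x => g • x) ⁻¹' A}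

/-- The σ-algebra of `G`-invariant measurable sets. -/
def invSigma (G X : Type*) [Group G] [MulAction G X] [MeasurableSpace X] :
    MeasurableSpace X :=
  MeasurableSpace.generateFrom {A | MeasurableSet A ∧ ∀ g : G, (fun x => g • x) ⁻¹' A = A}

/-- Conditional Shannon entropy `H_μ(α | m)` of a countable partition `α` given a
sub-σ-algebra `m`, valued in `[0,∞]`. -/
noncomputable def condEnt {X : Type*} (m : MeasurableSpace X) [mX : MeasurableSpace X]
    (μ : Measure X) {ι : Type*} (α : ι → Set X) : ℝ≥0∞ :=
  ∫⁻ x, ∑' i, ENNReal.ofReal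
    (Real.negMulLog ((μ[(α i).indicator (fun _ => (1 : ℝ)) | m]) x)) ∂μ

/-- Shannon entropy `H_μ(α)` of a countable partition. -/
noncomputable def shEnt {X : Type*} [MeasurableSpace X] (μ : Measure X)
    {ι : Type*} (α : ι → Set X) : ℝ≥0∞ :=
  ∑' i, ENNReal.ofReal (Real.negMulLog (μ (α i)).toReal)

/-- `α` is a countable Borel partition of `X` (indexed by `ℕ`, cells may be empty). -/
def IsPartition {X : Type*} [MeasurableSpace X] (α : ℕ → Set X) : Prop :=
  (∀ i, MeasurableSet (α i)) ∧ Pairwise (Function.onFun Disjoint α) ∧ (⋃ i, α i) = univ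

/-- Every set of `ξ` agrees with an `m`-measurable set modulo `μ`-null sets. -/
def SubsetMod {X : Type*} (m : MeasurableSpace X) [mX : MeasurableSpace X] (μ : Measure X)
    (ξ : Set (Set X)) : Prop :=
  ∀ A ∈ ξ, ∃ B, MeasurableSet[m] B ∧ μ (A ∆ B) = 0

/-- Outer Rokhlin entropy `rh_{G,μ}(ξ | F)`. -/
noncomputable def outerRokhlin (G : Type*) {X : Type*} (ξ : Set (Set X))
    (F : MeasurableSpace X) [Group G] [MulAction G X] [mX : MeasurableSpace X]
    (μ : Measure X) : ℝ≥0∞ :=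
  sInf { h | ∃ α : ℕ → Set X, IsPartition α ∧
      SubsetMod (sigmaG G (Set.range α) ⊔ F ⊔ invSigma G X) μ ξ ∧
      h = condEnt (F ⊔ invSigma G X) μ α }

/-- Rokhlin entropy `rh_G(X, μ | F)`. -/
noncomputable def rokhlin (G : Type*) {X : Type*} (F : MeasurableSpace X) [Group G]
    [MulAction G X] [mX : MeasurableSpace X] (μ : Measure X) : ℝ≥0∞ :=
  outerRokhlin G {A | MeasurableSet A} F μ

/-- Outer Rokhlin entropy `rh_{G,μ}(S | F)` of a sub-σ-algebra `S`. -/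
noncomputable def outerRokhlinAlg (G : Type*) {X : Type*} (S F : MeasurableSpace X) [Group G]
    [MulAction G X] [mX : MeasurableSpace X] (μ : Measure X) : ℝ≥0∞ :=
  outerRokhlin G {A | MeasurableSet[S] A} F μ

/-- The action of `G` on `(X, μ)` is probability-measure-preserving. -/
def IsPmp (G : Type*) {X : Type*} [Group G] [MulAction G X] [MeasurableSpace X]
    (μ : Measure X) : Prop :=
  ∀ g : G, MeasurePreserving (fun x => g • x) μ μ

/-- Aperiodicity: μ-almost-every `G`-orbit is infinite. -/
def Aperiodic (G : Type*) {X : Type*} [Group G] [MulAction G X] [MeasurableSpace X]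
    (μ : Measure X) : Prop :=
  ∀ᵐ x ∂μ, (MulAction.orbit G x).Infinite

/-- Ergodicity of a measure: every invariant Borel set is null or conull. -/
def IsErgodicInv (G : Type*) {X : Type*} [Group G] [MulAction G X] [MeasurableSpace X]
    (ν : Measure X) : Prop :=
  ∀ A : Set X, MeasurableSet A → (∀ g : G, (fun x => g • x) ⁻¹' A = A) → ν A = 0 ∨ ν A = 1

/-- `F` is a `G`-invariant σ-algebra. -/
def InvariantAlg (G : Type*) {X : Type*} (F : MeasurableSpace X) [Group G] [MulAction G X] :
    Prop :=
  ∀ (g : G) (A : Set X), MeasurableSet[F] A → MeasurableSet[F] ((fun x => g • x) ⁻¹' A)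

/-- `F` is countably generated. -/
def CountablyGen {X : Type*} (F : MeasurableSpace X) : Prop :=
  ∃ S : Set (Set X), S.Countable ∧ F = MeasurableSpace.generateFrom S

/-- `π` is an ergodic decomposition map for `μ`. -/
def IsErgDecomp (G : Type*) {X : Type*} [Group G] [MulAction G X] [MeasurableSpace X]
    (μ : Measure X) (π : X → Measure X) : Prop :=
  Measurable π ∧
  (∀ x, IsProbabilityMeasure (π x) ∧ IsPmp G (π x) ∧ IsErgodicInv G (π x)) ∧
  (∀ (g : G) (x : X), π (g • x) = π x) ∧
  (∀ ν : Measure X, IsProbabilityMeasure ν → IsPmp G ν → IsErgodicInv G ν →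
      ν {x | π x = ν} = 1) ∧
  (∀ B : Set X, MeasurableSet B → μ B = ∫⁻ x, π x B ∂μ)

/-- The left-shift action of `G` on `L^G = (G → L)`: `(g • x) h = x (g⁻¹ * h)`. -/
instance shiftMulAction {G L : Type*} [Group G] : MulAction G (G → L) where
  smul g x := fun h => x (g⁻¹ * h)
  one_smul x := by funext h; show x (1⁻¹ * h) = x h; simp
  mul_smul g g' x := by
    funext h; show x ((g * g')⁻¹ * h) = x (g'⁻¹ * (g⁻¹ * h)); simp [mul_assoc]

lemma lintegral_condExp_mul' {X : Type*} {m : MeasurableSpace X} [mX : MeasurableSpace X]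
    (hm : m ≤ mX) (μ : Measure X) [IsFiniteMeasure μ] {f : X → ℝ} (hf : Integrable f μ)
    (hfm : Measurable f) (hf0 : ∀ x, 0 ≤ f x) {g : X → ℝ≥0∞} (hg : Measurable[m] g) :
    ∫⁻ x, ENNReal.ofReal (μ[f|m] x) * g x ∂μ = ∫⁻ x, ENNReal.ofReal (f x) * g x ∂μ := by
  have h0 : 0 ≤ᵐ[μ] μ[f|m] := condExp_nonneg (Filter.Eventually.of_forall hf0)
  have hmeas : Measurable (μ[f|m]) := (stronglyMeasurable_condExp.mono hm).measurable
  have htrim : (μ.withDensity (fun x => ENNReal.ofReal (μ[f|m] x))).trim hm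
      = (μ.withDensity (fun x => ENNReal.ofReal (f x))).trim hm := by
    refine @Measure.ext X m _ _ ?_
    intro s hs
    rw [trim_measurableSet_eq hm hs, trim_measurableSet_eq hm hs,
      withDensity_apply _ (hm s hs), withDensity_apply _ (hm s hs),
      ← ofReal_integral_eq_lintegral_ofReal integrable_condExp.integrableOn
        (ae_restrict_of_ae h0),
      ← ofReal_integral_eq_lintegral_ofReal hf.integrableOn
        (Filter.Eventually.of_forall hf0), setIntegral_condExp hm hf hs]
  have h1 := lintegral_withDensity_eq_lintegral_mul μ (f := fun x => ENNReal.ofReal (μ[f|m] x))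
    hmeas.ennreal_ofReal (hg.mono hm le_rfl)
  have h2 := lintegral_withDensity_eq_lintegral_mul μ (f := fun x => ENNReal.ofReal (f x))
    hfm.ennreal_ofReal (hg.mono hm le_rfl)
  simp only [Pi.mul_apply] at h1 h2
  rw [← h1, ← h2, ← lintegral_trim hm hg, htrim, lintegral_trim hm hg]

lemma gibbs_pointwise {f q : ℝ} (hf : 0 ≤ f) (hq : 0 < q) :
    Real.negMulLog f + f ≤ f * (-Real.log q) + q := by
  rcases hf.eq_or_lt with h | h
  · rw [← h]; simp [hq.le]
  · have h1 := Real.log_le_sub_one_of_pos (div_pos hq h)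
    rw [Real.log_div hq.ne' h.ne'] at h1
    have h2 : f * (Real.log q - Real.log f) ≤ f * (q / f - 1) := by gcongr
    have h3 : f * (q / f - 1) = q - f := by field_simp
    rw [Real.negMulLog]
    nlinarith

lemma condEnt_le_gibbs {X T : Type*} {m : MeasurableSpace X} [mX : MeasurableSpace X]
    (hm : m ≤ mX) (μ : Measure X) [IsProbabilityMeasure μ] [Countable T]
    [MeasurableSpace T] [DiscreteMeasurableSpace T] (b : X → T) (hb : Measurable b)
    (q : X → T → ℝ) (hqm : ∀ t, Measurable[m] (fun x => q x t)) (hq0 : ∀ x t, 0 ≤ q x t)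
    (hqs : ∀ x, ∑' t, ENNReal.ofReal (q x t) ≤ 1) (hqb : ∀ x, 0 < q x (b x)) :
    condEnt m μ (fun t => b ⁻¹' {t}) ≤ ∫⁻ x, ENNReal.ofReal (-Real.log (q x (b x))) ∂μ := by
  classical
  have hset : ∀ t, MeasurableSet (b ⁻¹' {t}) := fun t => hb (MeasurableSet.of_discrete)
  set e : T → X → ℝ := fun t => (b ⁻¹' {t}).indicator (fun _ => (1 : ℝ)) with he
  have hem : ∀ t, Measurable (e t) := fun t => measurable_const.indicator (hset t)
  have he0 : ∀ t x, 0 ≤ e t x := fun t x => indicator_nonneg (fun _ _ => zero_le_one) x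
  have hei : ∀ t, Integrable (e t) μ := fun t => (integrable_const (1 : ℝ)).indicator (hset t)
  have hq1 : ∀ x t, q x t ≤ 1 := by
    intro x t
    have := (ENNReal.le_tsum t).trans (hqs x)
    exact ENNReal.ofReal_le_one.mp this
  have hf0 : ∀ t, 0 ≤ᵐ[μ] μ[e t|m] := fun t => condExp_nonneg (Filter.Eventually.of_forall (he0 t))
  have hfm : ∀ t, Measurable (μ[e t|m]) := fun t =>
    (stronglyMeasurable_condExp.mono hm).measurable
  have hsupp : ∀ t, ∀ᵐ x ∂μ, q x t = 0 → μ[e t|m] x = 0 := by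
    intro t
    have hS : MeasurableSet[m] {x | q x t ≠ 0} := 
      (hqm t) (measurableSet_singleton (0 : ℝ)).compl
    have heq : {x | q x t ≠ 0}.indicator (e t) = e t := by
      rw [indicator_eq_self]
      intro x hx
      have : b x = t := by
        by_contra hne
        exact hx (by simp [he, hne])
      have h2 := hqb x
      rw [this] at h2
      exact h2.ne'
    have h1 := condExp_indicator (m := m) (hei t) hS
    rw [heq] at h1
    filter_upwards [h1] with x hx hq
    rw [hx]; simp [hq]
  have key : ∀ t, ∀ᵐ x ∂μ, ENNReal.ofReal (Real.negMulLog (μ[e t|m] x)) +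
      ENNReal.ofReal (μ[e t|m] x) ≤
      ENNReal.ofReal (μ[e t|m] x) * ENNReal.ofReal (-Real.log (q x t)) + 
        ENNReal.ofReal (q x t) := by
    intro t
    have hle1 : μ[e t|m] ≤ᵐ[μ] fun _ => (1:ℝ) := by
      have := condExp_mono (m := m) (hei t) (integrable_const (1:ℝ)) (μ := μ)
        (Filter.Eventually.of_forall (fun x => 
          indicator_le' (fun _ _ => le_rfl) (fun _ _ => zero_le_one) x))
      rwa [condExp_const hm] at this
    filter_upwards [hf0 t, hsupp t, hle1] with x h0 hs h1
    rcases (hq0 x t).eq_or_lt with h | h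
    · rw [hs h.symm]; simp
    · have := gibbs_pointwise h0 h
      have hl : 0 ≤ -Real.log (q x t) := by
        have := Real.log_nonpos h.le (hq1 x t); linarith
      rw [← ENNReal.ofReal_mul h0, ← ENNReal.ofReal_add (Real.negMulLog_nonneg h0 h1) h0,
        ← ENNReal.ofReal_add (mul_nonneg h0 hl) h.le]
      exact ENNReal.ofReal_le_ofReal this
  have hint1 : ∫⁻ x, ∑' t, ENNReal.ofReal (μ[e t|m] x) ∂μ = 1 := by
    rw [lintegral_tsum (fun t => (hfm t).ennreal_ofReal.aemeasurable)]
    have : ∀ t, ∫⁻ x, ENNReal.ofReal (μ[e t|m] x) ∂μ = ∫⁻ x, ENNReal.ofReal (e t x) ∂μ := by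
      intro t
      have := lintegral_condExp_mul' hm μ (hei t) (hem t) (he0 t) (g := fun _ => 1)
        measurable_const
      simpa using this
    simp_rw [this]
    rw [← lintegral_tsum (fun t => (hem t).ennreal_ofReal.aemeasurable)]
    have h2 : ∀ x, ∑' t, ENNReal.ofReal (e t x) = 1 := by
      intro x
      rw [tsum_eq_single (b x)]
      · simp [he]
      · intro t ht
        have : b x ≠ t := fun h => ht h.symm
        simp [he, this]
    simp [h2]
  have hmain : condEnt m μ (fun t => b ⁻¹' {t}) + 1 ≤
      (∫⁻ x, ENNReal.ofReal (-Real.log (q x (b x))) ∂μ) + 1 := by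
    calc condEnt m μ (fun t => b ⁻¹' {t}) + 1 
        = (∫⁻ x, ∑' t, ENNReal.ofReal (Real.negMulLog (μ[e t|m] x)) ∂μ) + 
          ∫⁻ x, ∑' t, ENNReal.ofReal (μ[e t|m] x) ∂μ := by rw [hint1]; rfl
      _ = ∫⁻ x, ((∑' t, ENNReal.ofReal (Real.negMulLog (μ[e t|m] x))) + 
          ∑' t, ENNReal.ofReal (μ[e t|m] x)) ∂μ := by
          rw [lintegral_add_right]
          exact Measurable.tsum (fun t => (hfm t).ennreal_ofReal)
      _ ≤ ∫⁻ x, ((∑' t, ENNReal.ofReal (μ[e t|m] x) * ENNReal.ofReal (-Real.log (q x t))) +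
           1) ∂μ := by
          apply lintegral_mono_ae
          filter_upwards [ae_all_iff.2 key] with x hx
          rw [← ENNReal.tsum_add]
          refine (ENNReal.tsum_le_tsum hx).trans ?_
          rw [ENNReal.tsum_add]
          gcongr
          exact hqs x
      _ = (∫⁻ x, (∑' t, ENNReal.ofReal (μ[e t|m] x) * ENNReal.ofReal (-Real.log (q x t))) ∂μ)
           + 1 := by
          rw [lintegral_add_right _ measurable_const]; simp
      _ = _ := by
          congr 1
          have hgm : ∀ t, Measurable[m] (fun x => ENNReal.ofReal (-Real.log (q x t))) := fun t =>
            ENNReal.measurable_ofReal.comp ((Real.measurable_log.comp (hqm t)).neg)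
          have hA1 : ∀ t, AEMeasurable (fun x => ENNReal.ofReal (μ[e t|m] x) *
              ENNReal.ofReal (-Real.log (q x t))) μ := fun t =>
            ((hfm t).ennreal_ofReal.mul ((hgm t).mono hm le_rfl)).aemeasurable
          have hA2 : ∀ t, AEMeasurable (fun x => ENNReal.ofReal (e t x) *
              ENNReal.ofReal (-Real.log (q x t))) μ := fun t =>
            ((hem t).ennreal_ofReal.mul ((hgm t).mono hm le_rfl)).aemeasurable
          rw [lintegral_tsum hA1]
          have : ∀ t, ∫⁻ x, ENNReal.ofReal (μ[e t|m] x) * ENNReal.ofReal (-Real.log (q x t)) ∂μ =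
            ∫⁻ x, ENNReal.ofReal (e t x) * ENNReal.ofReal (-Real.log (q x t)) ∂μ := fun t =>
            lintegral_condExp_mul' hm μ (hei t) (hem t) (he0 t) (hgm t)
          simp_rw [this]
          rw [← lintegral_tsum hA2]
          apply lintegral_congr
          intro x
          rw [tsum_eq_single (b x)]
          · simp [he]
          · intro t ht
            have : b x ≠ t := fun h => ht h.symm
            simp [he, this]
  exact (ENNReal.add_le_add_iff_right ENNReal.one_ne_top).1 hmain

/-- Injective coding of a finite probability space by ranks. -/
lemma exists_rank_code {W : Type*} [Fintype W] (P : W → ℝ) (hP0 : ∀ w, 0 ≤ P w)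
    (hP : ∑ w, P w ≤ 1) :
    ∃ N : W → ℕ, Injective N ∧ (∀ w, 1 ≤ N w) ∧ ∀ w, (N w : ℝ) * P w ≤ 1 := by
  classical
  let e := Fintype.equivFin W
  let k : W → ℝ ×ₗ Fin (Fintype.card W) := fun w => toLex (P w, e w)
  have hk : Injective k := by
    intro w w' h
    have : (P w, e w) = (P w', e w') := toLex.injective h
    exact e.injective (Prod.ext_iff.1 this).2
  refine ⟨fun w => (Finset.univ.filter (fun w' => k w ≤ k w')).card, ?_, ?_, ?_⟩
  · have hs : ∀ w w', k w < k w' → (Finset.univ.filter (fun u => k w' ≤ k u)).card <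
        (Finset.univ.filter (fun u => k w ≤ k u)).card := by
      intro w w' h
      apply Finset.card_lt_card
      rw [Finset.ssubset_iff_of_subset]
      · exact ⟨w, by simp, by simpa using h⟩
      · intro u hu
        simp only [Finset.mem_filter, Finset.mem_univ, true_and] at hu ⊢
        exact h.le.trans hu
    intro w w' h
    rcases lt_trichotomy (k w) (k w') with h1 | h1 | h1
    · exact absurd h (hs _ _ h1).ne'
    · exact hk h1
    · exact absurd h (hs _ _ h1).ne
  · intro w
    exact Finset.card_pos.2 ⟨w, by simp⟩
  · intro w
    calc ((Finset.univ.filter (fun w' => k w ≤ k w')).card : ℝ) * P w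
        = ∑ w' ∈ Finset.univ.filter (fun w' => k w ≤ k w'), P w := by
          rw [Finset.sum_const, nsmul_eq_mul]
      _ ≤ ∑ w' ∈ Finset.univ.filter (fun w' => k w ≤ k w'), P w' := by
          apply Finset.sum_le_sum
          intro w' hw'
          simp only [Finset.mem_filter, Finset.mem_univ, true_and, k, Prod.Lex.toLex_le_toLex] at hw'
          rcases hw' with h | h
          · exact h.le
          · exact h.1.le
      _ ≤ ∑ w', P w' := Finset.sum_le_univ_sum_of_nonneg hP0
      _ ≤ 1 := hP

lemma meas_to_count {X T : Type*} {M : MeasurableSpace X} [MeasurableSpace T] [Countable T]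
    {f : X → T} (h : ∀ t, MeasurableSet[M] (f ⁻¹' {t})) : Measurable[M] f :=
  measurable_to_countable' h

lemma InvariantAlg.measurable_smul {G X : Type*} {M : MeasurableSpace X} [Group G] [MulAction G X]
    (h : InvariantAlg G M) (g : G) : Measurable[M, M] (fun x : X => g • x) := by
  intro A hA
  exact h g A hA

lemma InvariantAlg.sup {G X : Type*} {M N : MeasurableSpace X} [Group G] [MulAction G X]
    (h : InvariantAlg G M) (h' : InvariantAlg G N) : InvariantAlg G (M ⊔ N) := by
  intro g
  have : MeasurableSpace.comap (fun x : X => g • x) (M ⊔ N) ≤ M ⊔ N := by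
    rw [MeasurableSpace.comap_sup]
    refine sup_le_sup ?_ ?_
    · rintro _ ⟨A, hA, rfl⟩; exact h g A hA
    · rintro _ ⟨A, hA, rfl⟩; exact h' g A hA
  intro A hA
  exact this _ ⟨A, hA, rfl⟩

lemma invariantAlg_generateFrom {G X : Type*} [Group G] [MulAction G X] (ξ : Set (Set X))
    (h : ∀ g : G, ∀ A ∈ ξ, MeasurableSet[MeasurableSpace.generateFrom ξ] ((fun x => g • x) ⁻¹' A)) :
    InvariantAlg G (MeasurableSpace.generateFrom ξ) := by
  intro g A hA
  induction A, hA using MeasurableSpace.generateFrom_induction with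
  | hC t ht _ => exact h g t ht
  | empty => exact @MeasurableSet.empty _ (MeasurableSpace.generateFrom ξ)
  | compl t _ ih => exact ih.compl
  | iUnion f _ ih => 
    rw [preimage_iUnion]
    exact MeasurableSet.iUnion ih

lemma invariantAlg_sigmaG {G X : Type*} [Group G] [MulAction G X] (ξ : Set (Set X)) :
    InvariantAlg G (sigmaG G ξ) := by
  apply invariantAlg_generateFrom
  rintro g _ ⟨h, A, hA, rfl⟩
  apply MeasurableSpace.measurableSet_generateFrom
  refine ⟨h * g, A, hA, ?_⟩
  ext x; simp [mul_smul]

lemma invariantAlg_invSigma {G X : Type*} [Group G] [MulAction G X] [MeasurableSpace X] :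
    InvariantAlg G (invSigma G X) := by
  apply invariantAlg_generateFrom
  rintro g A hA
  rw [hA.2 g]
  exact MeasurableSpace.measurableSet_generateFrom hA

lemma invSigma_le {G X : Type*} [Group G] [MulAction G X] [mX : MeasurableSpace X] :
    invSigma G X ≤ mX := MeasurableSpace.generateFrom_le (fun _ h => h.1)

lemma measurableSet_invSigma {G X : Type*} [Group G] [MulAction G X] [mX : MeasurableSpace X]
    {A : Set X} (hA : MeasurableSet A) (h : ∀ g : G, (fun x => g • x) ⁻¹' A = A) :
    MeasurableSet[invSigma G X] A := MeasurableSpace.measurableSet_generateFrom ⟨hA, h⟩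

lemma measurableSet_sigmaG {G X : Type*} [Group G] [MulAction G X] {ξ : Set (Set X)}
    {A : Set X} (hA : A ∈ ξ) : MeasurableSet[sigmaG G ξ] A :=
  MeasurableSpace.measurableSet_generateFrom ⟨1, A, hA, by ext; simp⟩

lemma partition_of_countable {X T : Type*} (m : MeasurableSpace X) [mX : MeasurableSpace X]
    (μ : Measure X) [Countable T] [MeasurableSpace T] [DiscreteMeasurableSpace T]
    (b : X → T) (hb : Measurable b) :
    ∃ β : ℕ → Set X, IsPartition β ∧
      (∀ M : MeasurableSpace X, (∀ i, MeasurableSet[M] (β i)) → Measurable[M] b) ∧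
      condEnt m μ β = condEnt m μ (fun t => b ⁻¹' {t}) := by
  obtain ⟨e, he⟩ := exists_injective_nat T
  refine ⟨fun i => {x | e (b x) = i}, ⟨?_, ?_, ?_⟩, ?_, ?_⟩
  · intro i
    exact hb (MeasurableSet.of_discrete (s := {t | e t = i}))
  · intro i j hij
    rw [onFun, Set.disjoint_left]
    intro x hx hx'
    exact hij (hx.symm.trans hx')
  · ext x; simp
  · intro M hM
    apply measurable_to_countable'
    intro t
    have : b ⁻¹' {t} = {x | e (b x) = e t} := by
      ext x; simp [he.eq_iff]
    rw [this]
    exact hM _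
  · unfold condEnt
    apply lintegral_congr
    intro x
    have h1 : ∀ t, b ⁻¹' {t} = {x | e (b x) = e t} := by
      intro t; ext x; simp [he.eq_iff]
    simp_rw [h1]
    refine (he.tsum_eq (f := fun i => ENNReal.ofReal (Real.negMulLog
      ((μ[({x | e (b x) = i}).indicator (fun _ => (1 : ℝ)) | m]) x))) ?_).symm
    intro i hi
    by_contra hne
    apply hi
    have : {x | e (b x) = i} = ∅ := by
      ext x
      simp only [mem_setOf_eq, mem_empty_iff_false, iff_false]
      intro h
      exact hne ⟨b x, h⟩
    have h0 : (fun _ : X => (0:ℝ)) = 0 := rfl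
    simp [this, h0, condExp_zero]

theorem code_lemma {G X A S Z : Type*} (F : MeasurableSpace X) [Group G] [Countable G]
    [MulAction G X] [mX : MeasurableSpace X] (hFle : F ≤ mX) 
    (hFinv : InvariantAlg G F) (μ : Measure X) [IsProbabilityMeasure μ]
    (hμ : IsPmp G μ)
    [Fintype A] [MeasurableSpace A] [DiscreteMeasurableSpace A]
    [Finite S] [MeasurableSpace S] [DiscreteMeasurableSpace S]
    [Fintype Z] [DecidableEq Z] [MeasurableSpace Z] [DiscreteMeasurableSpace Z]
    (a : X → A) (ha : Measurable a) (σ : X → S) (z : X → Z) (z0 : Z) (hz : Measurable z)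
    (hσ : ∀ M : MeasurableSpace X, InvariantAlg G M →
      F ⊔ @invSigma G X _ _ mX ≤ M → Measurable[M] z → Measurable[M] σ)
    (hσD : ∀ j, MeasurableSet[F ⊔ invSigma G X] {x | σ x = j ∧ ∀ g : G, z (g • x) = z0})
    (q : S → A → ℝ) (hq : ∀ j i, 0 < q j i) (hqs : ∀ j, ∑ i, q j i ≤ 1)
    (qz : Z → ℝ) (hqz : ∀ i, 0 < qz i) (hqzs : ∑ i, qz i ≤ 1)
    (κ : ℝ) (hκ : 0 < κ) (Zk : ℝ) (hZk1 : 1 ≤ Zk)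
    (hZk : ∑' n : ℕ, ENNReal.ofReal (((n : ℝ) + 1) ^ (-(1 + κ))) ≤ ENNReal.ofReal Zk)
    (κ' : ℝ) (hκ' : 0 < κ') :
    ∃ β : ℕ → Set X, IsPartition β ∧
      Measurable[sigmaG G (Set.range β) ⊔ F ⊔ invSigma G X] a ∧
      Measurable[sigmaG G (Set.range β) ⊔ F ⊔ invSigma G X] z ∧
      condEnt (F ⊔ invSigma G X) μ β ≤ 
        (∫⁻ x, ENNReal.ofReal ((1 + κ) * (-Real.log (q (σ x) (a x))) + (-Real.log (qz (z x))) +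
          (if z x ≠ z0 then Real.log Zk else 0)) ∂μ) + ENNReal.ofReal κ' := by
  classical
  have hact : ∀ g : G, Measurable (fun x : X => g • x) := fun g => (hμ g).measurable
  have hmXinv : InvariantAlg G mX := fun g A hA => hact g hA
  have hmle : F ⊔ invSigma G X ≤ mX := sup_le hFle invSigma_le
  have hσm : Measurable σ := hσ mX hmXinv hmle hz
  obtain ⟨x₀⟩ : Nonempty X := μ.nonempty_of_neZero
  set a0 : A := a x₀
  obtain ⟨g, hg⟩ := exists_surjective_nat G
  let Xk : ℕ → Set X := fun k => {x | z (g k • x) ≠ z0 ∧ ∀ l < k, z (g l • x) = z0}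
  let D : Set X := {x | ∃ h : G, z (h • x) ≠ z0}
  let hit : ℕ → Set X := fun K => {x | ∃ k < K, z (g k • x) ≠ z0}
  have hXkM : ∀ M : MeasurableSpace X, InvariantAlg G M → Measurable[M] z → 
      ∀ k, MeasurableSet[M] (Xk k) := by
    intro M hM hzM k
    have h1 : ∀ l, MeasurableSet[M] {x | z (g l • x) = z0} := fun l =>
      (hzM.comp (hM.measurable_smul (g l))) (MeasurableSet.of_discrete (s := {z0}))
    have : Xk k = {x | z (g k • x) = z0}ᶜ ∩ ⋂ l : Fin k, {x | z (g l • x) = z0} := by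
      ext x
      simp only [Xk, mem_setOf_eq, mem_inter_iff, mem_compl_iff, mem_iInter]
      refine and_congr Iff.rfl ⟨fun h l => h l l.2, fun h l hl => h ⟨l, hl⟩⟩
    rw [this]
    exact (h1 k).compl.inter (MeasurableSet.iInter fun l => h1 l)
  have hhit : ∀ K, MeasurableSet (hit K) := by
    intro K
    have : hit K = ⋃ k : Fin K, {x | z (g k • x) = z0}ᶜ := by
      ext x
      simp only [hit, mem_setOf_eq, mem_compl_iff, mem_iUnion]
      exact ⟨fun ⟨k, hk, h⟩ => ⟨⟨k, hk⟩, h⟩, fun ⟨k, h⟩ => ⟨k, k.2, h⟩⟩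
    rw [this]
    exact MeasurableSet.iUnion fun l => 
      ((hz.comp (hact _)) (MeasurableSet.of_discrete (s := {z0}))).compl
  have hhitX : ∀ K x, x ∈ hit K → ∃ k : Fin K, x ∈ Xk k := by
    intro K x hx
    have hx' : ∃ k, k < K ∧ z (g k • x) ≠ z0 := hx
    refine ⟨⟨Nat.find hx', (Nat.find_spec hx').1⟩, (Nat.find_spec hx').2, ?_⟩
    intro l hl
    have := Nat.find_min hx' hl
    by_contra h
    exact this ⟨hl.trans (Nat.find_spec hx').1, h⟩
  have hXkinj : ∀ x k l, x ∈ Xk k → x ∈ Xk l → k = l := by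
    intro x k l hk hl
    rcases lt_trichotomy k l with h | h | h
    · exact absurd (hl.2 k h) hk.1
    · exact h
    · exact absurd (hk.2 l h) hl.1
  have hXkD : ∀ k, Xk k ⊆ D := fun k x hx => ⟨g k, hx.1⟩
  have hDU : D = ⋃ K, hit K := by
    ext x
    simp only [D, hit, mem_setOf_eq, mem_iUnion]
    constructor
    · rintro ⟨h, hh⟩
      obtain ⟨k, rfl⟩ := hg h
      exact ⟨k + 1, k, Nat.lt_succ_self k, hh⟩
    · rintro ⟨K, k, hk, h⟩
      exact ⟨_, h⟩
  have hDm : MeasurableSet D := by rw [hDU]; exact MeasurableSet.iUnion hhit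
  have hDI : MeasurableSet[invSigma G X] D := by
    apply measurableSet_invSigma hDm
    intro h
    ext x
    simp only [D, mem_preimage, mem_setOf_eq]
    constructor
    · rintro ⟨k, hk⟩; exact ⟨k * h, by rwa [mul_smul]⟩
    · rintro ⟨k, hk⟩; exact ⟨k * h⁻¹, by rwa [mul_smul, inv_smul_smul]⟩
  have hDI' : MeasurableSet[F ⊔ invSigma G X] D := 
    (le_sup_right : invSigma G X ≤ F ⊔ invSigma G X) _ hDI
  -- choice of δ and K
  obtain ⟨δ, hδ0, hδ1, hδ⟩ : ∃ δ : ℝ, 0 < δ ∧ δ < 1 ∧ -Real.log (1 - δ) ≤ κ' / 2 := by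
    refine ⟨1 - Real.exp (-(κ' / 2)), ?_, ?_, ?_⟩
    · have : Real.exp (-(κ' / 2)) < 1 := by rw [← Real.exp_zero]; exact Real.exp_lt_exp.2 (by linarith)
      linarith
    · have := Real.exp_pos (-(κ' / 2)); linarith
    · simp
  have hcardA : (0 : ℝ) < Fintype.card A := by
    have : 0 < Fintype.card A := Fintype.card_pos_iff.2 ⟨a0⟩
    exact_mod_cast this
  set BB : ℝ := -Real.log (δ / Fintype.card A) with hBB
  obtain ⟨K, hK⟩ : ∃ K, μ (D \ hit K) * ENNReal.ofReal BB ≤ ENNReal.ofReal (κ' / 2) := by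
    have hlim : Filter.Tendsto (fun K => μ (D \ hit K)) Filter.atTop (nhds 0) := by
      have h1 := tendsto_measure_iInter_atTop (μ := μ) (s := fun K => D \ hit K)
        (fun K => (hDm.diff (hhit K)).nullMeasurableSet)
        (fun K K' hKK x hx => ⟨hx.1, fun h => hx.2 (by
          obtain ⟨k, hk, hkk⟩ := h
          exact ⟨k, hk.trans_le hKK, hkk⟩)⟩) ⟨0, measure_ne_top _ _⟩
      have h2 : ⋂ K, D \ hit K = ∅ := by
        rw [hDU]
        ext x
        simp only [mem_iInter, mem_diff, mem_iUnion, mem_empty_iff_false, iff_false, not_forall,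
          not_and, not_not]
        by_cases h : ∃ K, x ∈ hit K
        · obtain ⟨K, hK⟩ := h
          exact ⟨K, fun _ => hK⟩
        · exact ⟨0, fun h' => absurd h' h⟩
      rw [h2, measure_empty] at h1
      exact h1
    have h3 := ENNReal.Tendsto.mul_const hlim (b := ENNReal.ofReal BB) 
      (Or.inr ENNReal.ofReal_ne_top)
    rw [zero_mul] at h3
    have h4 := h3.eventually (gt_mem_nhds (ENNReal.ofReal_pos.2 (half_pos hκ')))
    obtain ⟨K, hK⟩ := h4.exists
    exact ⟨K, hK.le⟩
  -- the code
  let qo : Option S → A → ℝ := fun o i => o.elim (if i = a0 then 1 else 0) (fun j => q j i)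
  have hqo0 : ∀ o i, 0 ≤ qo o i := by
    rintro (_ | j) i
    · simp only [qo, Option.elim]; split_ifs <;> norm_num
    · exact (hq j i).le
  have hqos : ∀ o, ∑ i, qo o i ≤ 1 := by
    rintro (_ | j)
    · simp [qo]
    · exact hqs j
  have hcode : ∀ s : Fin K → Option S, ∃ N : (Fin K → A) → ℕ, Injective N ∧ (∀ w, 1 ≤ N w) ∧
      ∀ w, (N w : ℝ) * ∏ k, qo (s k) (w k) ≤ 1 := by
    intro s
    apply exists_rank_code
    · intro w; exact Finset.prod_nonneg (fun k _ => hqo0 _ _)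
    · rw [← Fintype.prod_sum (fun k i => qo (s k) i)]
      exact Finset.prod_le_one (fun k _ => Finset.sum_nonneg (fun i _ => hqo0 _ _)) 
        (fun k _ => hqos _)
  choose Nc hNinj hN1 hNle using hcode
  let s : X → (Fin K → Option S) := fun x k => 
    if (g k)⁻¹ • x ∈ Xk k then some (σ ((g k)⁻¹ • x)) else none
  let w : X → (Fin K → A) := fun x k =>
    if (g k)⁻¹ • x ∈ Xk k then a ((g k)⁻¹ • x) else a0
  let Nn : X → ℕ := fun x => if z x ≠ z0 then Nc (s x) (w x) - 1 else 0
  let o : X → Option A := fun x => if x ∈ hit K then none else some (a x)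
  let b : X → Z × ℕ × Option A := fun x => (z x, Nn x, o x)
  letI : MeasurableSpace (Option S) := ⊤
  letI : MeasurableSpace (Option A) := ⊤
  haveI : DiscreteMeasurableSpace (Option S) := ⟨fun _ => trivial⟩
  haveI : DiscreteMeasurableSpace (Option A) := ⟨fun _ => trivial⟩
  have hsM : ∀ M : MeasurableSpace X, InvariantAlg G M → Measurable[M] z → Measurable[M] σ →
      Measurable[M] s := by
    intro M hM hzM hσM
    refine measurable_pi_iff.2 (fun k => ?_)
    refine Measurable.ite (hM.measurable_smul (g k)⁻¹ (hXkM M hM hzM k)) ?_ measurable_const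
    exact (Measurable.of_discrete (f := fun j : S => some j)).comp 
      (hσM.comp (hM.measurable_smul (g k)⁻¹))
  have hwm : Measurable w := by
    refine measurable_pi_iff.2 (fun k => ?_)
    exact Measurable.ite (hact (g k)⁻¹ (hXkM mX hmXinv hz k)) (ha.comp (hact _)) measurable_const
  have hNm : Measurable Nn := by
    refine Measurable.ite (hz (MeasurableSet.of_discrete (s := {z0}))).compl ?_ measurable_const
    exact (Measurable.of_discrete (f := fun p : (Fin K → Option S) × (Fin K → A) => 
      Nc p.1 p.2 - 1)).comp ((hsM mX hmXinv hz hσm).prodMk hwm)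
  have hom : Measurable o := Measurable.ite (hhit K) measurable_const
    ((Measurable.of_discrete (f := fun j : A => some j)).comp ha)
  have hbm : Measurable b := hz.prodMk (hNm.prodMk hom)
  obtain ⟨β, hβ, hβM, hβent⟩ := partition_of_countable (F ⊔ invSigma G X) μ b hbm
  have hbM : Measurable[sigmaG G (Set.range β) ⊔ F ⊔ invSigma G X] b := by
    apply hβM
    intro i
    refine (le_sup_left.trans le_sup_left : sigmaG G (Set.range β) ≤ _) _ ?_
    exact measurableSet_sigmaG ⟨i, rfl⟩
  have hMinv : InvariantAlg G (sigmaG G (Set.range β) ⊔ F ⊔ invSigma G X) :=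
    ((invariantAlg_sigmaG _).sup hFinv).sup invariantAlg_invSigma
  have hMle : F ⊔ invSigma G X ≤ sigmaG G (Set.range β) ⊔ F ⊔ invSigma G X :=
    sup_le_sup le_sup_right le_rfl
  have hdec : ∀ M : MeasurableSpace X, Measurable[M] b → InvariantAlg G M →
      F ⊔ @invSigma G X _ _ mX ≤ M → Measurable[M] a ∧ Measurable[M] z := by
    intro M hbM hMinv hMle
    have hzM : Measurable[M] z := measurable_fst.comp hbM
    have hNM : Measurable[M] Nn := measurable_fst.comp (measurable_snd.comp hbM)
    have hoM : Measurable[M] o := measurable_snd.comp (measurable_snd.comp hbM)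
    have hσM : Measurable[M] σ := hσ M hMinv hMle hzM
    have hsM' := hsM M hMinv hzM hσM
    refine ⟨?_, hzM⟩
    haveI : Nonempty (Fin K → A) := ⟨fun _ => a0⟩
    let w' : X → (Fin K → A) := fun x => Function.invFun (Nc (s x)) (Nn x + 1)
    have hw'M : Measurable[M] w' := 
      (Measurable.of_discrete (f := fun p : (Fin K → Option S) × ℕ => 
        Function.invFun (Nc p.1) (p.2 + 1))).comp (hsM'.prodMk hNM)
    have hw' : ∀ x, z x ≠ z0 → w' x = w x := by
      intro x hx
      have h1 : Nn x + 1 = Nc (s x) (w x) := by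
        simp only [Nn, if_pos hx]
        have := hN1 (s x) (w x); omega
      simp only [w', h1]
      exact Function.leftInverse_invFun (hNinj (s x)) (w x)
    refine meas_to_count ?_
    intro i
    have : a ⁻¹' {i} = o ⁻¹' {some i} ∪ ⋃ k : Fin K, (Xk k ∩ 
        (fun x => w' (g k • x) k) ⁻¹' {i}) := by
      have hX : ∀ (k : Fin K) x, x ∈ Xk k → w' (g k • x) k = a x := by
        intro k x hx
        rw [hw' _ hx.1]
        simp [w, hx]
      ext x
      simp only [mem_preimage, mem_singleton_iff, mem_union, mem_iUnion, mem_inter_iff]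
      constructor
      · intro h
        by_cases hh : x ∈ hit K
        · right
          obtain ⟨k, hk⟩ := hhitX K x hh
          exact ⟨k, hk, by rw [hX k x hk, h]⟩
        · left; simp [o, hh, h]
      · rintro (h | ⟨k, hk, h⟩)
        · by_cases hh : x ∈ hit K
          · simp [o, hh] at h
          · simpa [o, hh] using h
        · rw [← hX k x hk, h]
    rw [this]
    refine (hoM MeasurableSet.of_discrete).union (MeasurableSet.iUnion fun k => 
      (hXkM M hMinv hzM k).inter ?_)
    exact ((measurable_pi_apply k).comp (hw'M.comp (hMinv.measurable_smul (g k)))) 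
      MeasurableSet.of_discrete
  refine ⟨β, hβ, (hdec _ hbM hMinv hMle).1, (hdec _ hbM hMinv hMle).2, ?_⟩
  · -- entropy
    rw [hβent]
    let c : X → ℝ := fun x => -Real.log (q (σ x) (a x))
    have hq1 : ∀ j i, q j i ≤ 1 := fun j i => 
      (Finset.single_le_sum (fun i _ => (hq j i).le) (Finset.mem_univ i)).trans (hqs j)
    have hqz1 : ∀ i, qz i ≤ 1 := fun i => 
      (Finset.single_le_sum (fun i _ => (hqz i).le) (Finset.mem_univ i)).trans hqzs
    have hc0 : ∀ x, 0 ≤ c x := fun x => by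
      have := Real.log_nonpos (hq (σ x) (a x)).le (hq1 (σ x) (a x))
      simp only [c]; linarith
    have hcm : Measurable c := 
      (Measurable.of_discrete (f := fun p : S × A => -Real.log (q p.1 p.2))).comp (hσm.prodMk ha)
    let qv : Option A → ℝ := fun o => o.elim (1 - δ) (fun _ => δ / Fintype.card A)
    let qn : Z → ℕ → ℝ := fun y n => if y ≠ z0 then ((n : ℝ) + 1) ^ (-(1 + κ)) / Zk else
      if n = 0 then 1 else 0
    let qd : X → Option A → ℝ := fun x o => if x ∈ D then qv o else o.elim 0 (q (σ x))
    let Q : X → Z × ℕ × Option A → ℝ := fun x t => qz t.1 * (qn t.1 t.2.1 * qd x t.2.2)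
    have hZk0 : 0 < Zk := by linarith
    have hqv0 : ∀ o, 0 < qv o := by
      rintro (_ | i)
      · simp only [qv, Option.elim]; linarith
      · simp only [qv, Option.elim]; positivity
    have hqn0 : ∀ y n, 0 ≤ qn y n := by
      intro y n
      simp only [qn]
      split_ifs <;> positivity
    have hqd0 : ∀ x o, 0 ≤ qd x o := by
      intro x o
      simp only [qd]
      split_ifs
      · exact (hqv0 o).le
      · cases o
        · exact le_rfl
        · exact (hq _ _).le
    have hqdm : ∀ o, Measurable[F ⊔ invSigma G X] (fun x => qd x o) := by
      intro o
      -- write as a function of a discrete-valued measurable map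
      let τ : X → Option S := fun x => if x ∈ D then none else some (σ x)
      have hτ : Measurable[F ⊔ invSigma G X] τ := by
        refine meas_to_count ?_
        rintro (_ | j)
        · have : τ ⁻¹' {none} = D := by
            ext x; by_cases h : x ∈ D <;> simp [τ, h]
          rw [this]; exact hDI'
        · have : τ ⁻¹' {some j} = {x | σ x = j ∧ ∀ g : G, z (g • x) = z0} := by
            ext x
            by_cases h : x ∈ D
            · have h' : ∃ g : G, z (g • x) ≠ z0 := h
              simp only [mem_preimage, τ, h, if_true, mem_singleton_iff, reduceCtorEq, false_iff,
                mem_setOf_eq, not_and, not_forall]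
              exact fun _ => h'
            · have h' : ∀ g : G, z (g • x) = z0 := by
                intro k; by_contra hk; exact h ⟨k, hk⟩
              simp [τ, h, h']
          rw [this]; exact hσD j
      have : (fun x => qd x o) = (fun t : Option S => t.elim (qv o) (fun j => o.elim 0 (q j))) ∘ τ := by
        funext x
        by_cases h : x ∈ D <;> simp [qd, τ, h]
      rw [this]
      exact Measurable.of_discrete.comp hτ
    have hQs : ∀ x, ∑' t, ENNReal.ofReal (Q x t) ≤ 1 := by
      intro x
      have e1 : ∀ t, ENNReal.ofReal (Q x t) = ENNReal.ofReal (qz t.1) * 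
          (ENNReal.ofReal (qn t.1 t.2.1) * ENNReal.ofReal (qd x t.2.2)) := by
        intro t
        rw [← ENNReal.ofReal_mul (hqn0 _ _), ← ENNReal.ofReal_mul (hqz _).le]
      simp_rw [e1]
      rw [ENNReal.tsum_prod']
      simp_rw [ENNReal.tsum_mul_left]
      have e2 : ∀ y, ∑' p : ℕ × Option A, ENNReal.ofReal (qn y p.1) * 
          ENNReal.ofReal (qd x p.2) ≤ 1 := by
        intro y
        rw [ENNReal.tsum_prod']
        simp_rw [ENNReal.tsum_mul_left]
        have e3 : ∑' o, ENNReal.ofReal (qd x o) ≤ 1 := by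
          rw [tsum_fintype, ← ENNReal.ofReal_sum_of_nonneg (fun o _ => hqd0 x o)]
          rw [ENNReal.ofReal_le_one, Fintype.sum_option]
          by_cases h : x ∈ D
          · simp only [qd, h, if_true, qv, Option.elim, Finset.sum_const, Finset.card_univ, 
              nsmul_eq_mul]
            rw [mul_div_cancel₀ _ hcardA.ne']; linarith
          · simp only [qd, h, if_false, Option.elim, zero_add]
            exact hqs _
        have e4 : ∑' n, ENNReal.ofReal (qn y n) ≤ 1 := by
          by_cases h : y ≠ z0
          · simp only [qn, if_pos h]
            simp_rw [div_eq_mul_inv]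
            have : ∀ n : ℕ, ENNReal.ofReal (((n : ℝ) + 1) ^ (-(1 + κ)) * Zk⁻¹) = 
                ENNReal.ofReal (((n : ℝ) + 1) ^ (-(1 + κ))) * (ENNReal.ofReal Zk)⁻¹ := by
              intro n
              rw [ENNReal.ofReal_mul (by positivity), ENNReal.ofReal_inv_of_pos hZk0]
            simp_rw [this]
            rw [ENNReal.tsum_mul_right, ← div_eq_mul_inv]
            exact ENNReal.div_le_of_le_mul (by rwa [one_mul])
          · simp only [qn, if_neg h]
            rw [tsum_eq_single 0]
            · simp
            · intro n hn; simp [hn]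
        rw [ENNReal.tsum_mul_right]
        calc _ ≤ (1 : ℝ≥0∞) * 1 := mul_le_mul' e4 e3
          _ = 1 := one_mul 1
      calc _ ≤ ∑' y, ENNReal.ofReal (qz y) * 1 := 
            ENNReal.tsum_le_tsum (fun y => mul_le_mul' le_rfl (e2 y))
        _ = ENNReal.ofReal (∑ y, qz y) := by
            simp only [mul_one]
            rw [tsum_fintype, ENNReal.ofReal_sum_of_nonneg (fun o _ => (hqz o).le)]
        _ ≤ 1 := by rwa [ENNReal.ofReal_le_one]
    have hqnb : ∀ x, 0 < qn (z x) (Nn x) := by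
      intro x
      by_cases h : z x ≠ z0
      · simp only [qn, if_pos h]; positivity
      · simp only [qn, Nn, if_neg h]; simp
    have hqdb : ∀ x, 0 < qd x (o x) := by
      intro x
      by_cases h : x ∈ D
      · simp only [qd, h, if_true]; exact hqv0 _
      · have h' : x ∉ hit K := by
          rintro ⟨k, hk, hh⟩; exact h ⟨_, hh⟩
        simp only [qd, h, o, h', if_false, Option.elim]; exact hq _ _
    have hgibbs := condEnt_le_gibbs hmle μ b hbm Q 
      (fun t => ((hqdm t.2.2).const_mul (qn t.1 t.2.1)).const_mul (qz t.1)) 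
      (fun x t => mul_nonneg (hqz _).le (mul_nonneg (hqn0 _ _) (hqd0 _ _))) hQs
      (fun x => mul_pos (hqz _) (mul_pos (hqnb x) (hqdb x)))
    refine hgibbs.trans ?_
    let fk : Fin K → X → ℝ := fun k => (Xk k).indicator c
    have hfk0 : ∀ k x, 0 ≤ fk k x := fun k x => indicator_nonneg (fun x _ => hc0 x) x
    have hfkm : ∀ k, Measurable (fk k) := fun k => hcm.indicator (hXkM mX hmXinv hz k)
    -- pointwise bounds
    have hlogN : ∀ x, z x ≠ z0 → Real.log ((Nn x : ℝ) + 1) ≤ ∑ k, fk k ((g k)⁻¹ • x) := by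
      intro x hx
      have h1 : (Nn x : ℝ) + 1 = Nc (s x) (w x) := by
        have : Nn x + 1 = Nc (s x) (w x) := by
          simp only [Nn, if_pos hx]
          have := hN1 (s x) (w x); omega
        exact_mod_cast this
      rw [h1]
      have h2 : ∀ k, 0 < qo (s x k) (w x k) := by
        intro k
        by_cases hk : (g k)⁻¹ • x ∈ Xk k
        · simp only [s, w, if_pos hk, qo, Option.elim]; exact hq _ _
        · simp only [s, w, if_neg hk, qo, Option.elim, if_true]; norm_num
      have h3 : ∀ k, fk k ((g k)⁻¹ • x) = - Real.log (qo (s x k) (w x k)) := by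
        intro k
        by_cases hk : (g k)⁻¹ • x ∈ Xk k
        · simp only [fk, indicator_of_mem hk, s, w, if_pos hk, qo, Option.elim, c]
        · simp only [fk, indicator_of_notMem hk, s, w, if_neg hk, qo, Option.elim, if_true]
          simp
      simp_rw [h3]
      rw [Finset.sum_neg_distrib, ← Real.log_prod (fun k _ => (h2 k).ne')]
      have h4 : 0 < ∏ k, qo (s x k) (w x k) := Finset.prod_pos (fun k _ => h2 k)
      have h5 : (0 : ℝ) < Nc (s x) (w x) := by
        exact_mod_cast hN1 (s x) (w x)
      have h6 := Real.log_nonpos (mul_nonneg h5.le h4.le) (hNle (s x) (w x))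
      rw [Real.log_mul h5.ne' h4.ne'] at h6
      linarith
    have hlogZ : 0 ≤ Real.log Zk := Real.log_nonneg hZk1
    have hBB0 : 0 ≤ BB := by
      rw [hBB]
      have h1 : (1:ℝ) ≤ Fintype.card A := by
        have : 1 ≤ Fintype.card A := Fintype.card_pos_iff.2 ⟨a0⟩
        exact_mod_cast this
      have := Real.log_nonpos (by positivity : 0 ≤ δ / Fintype.card A) 
        ((div_le_one hcardA).2 (hδ1.le.trans h1))
      linarith
    have hpt : ∀ x, -Real.log (Q x (b x)) ≤ 
        ((-Real.log (qz (z x)) + (if z x ≠ z0 then Real.log Zk else 0)) + 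
          (1 + κ) * ∑ k, fk k ((g k)⁻¹ • x)) + ((Dᶜ.indicator c x + κ' / 2) + 
            (D \ hit K).indicator (fun _ => BB) x) := by
      intro x
      have e1 : -Real.log (Q x (b x)) = -Real.log (qz (z x)) + (-Real.log (qn (z x) (Nn x))
          + -Real.log (qd x (o x))) := by
        simp only [Q, b]
        rw [Real.log_mul (hqz _).ne' (mul_pos (hqnb x) (hqdb x)).ne', 
          Real.log_mul (hqnb x).ne' (hqdb x).ne']
        ring
      have hsum0 : 0 ≤ ∑ k, fk k ((g k)⁻¹ • x) := Finset.sum_nonneg (fun k _ => hfk0 _ _)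
      have e2 : -Real.log (qn (z x) (Nn x)) ≤ (if z x ≠ z0 then Real.log Zk else 0) + 
          (1 + κ) * ∑ k, fk k ((g k)⁻¹ • x) := by
        by_cases h : z x ≠ z0
        · have hpos : (0:ℝ) < (Nn x : ℝ) + 1 := by positivity
          simp only [qn, if_pos h]
          rw [Real.log_div (by positivity) hZk0.ne', Real.log_rpow hpos]
          have := mul_le_mul_of_nonneg_left (hlogN x h) (by linarith : 0 ≤ 1 + κ)
          linarith
        · simp only [qn, Nn, if_neg h, if_true, Real.log_one]
          have := mul_nonneg (by linarith : 0 ≤ 1 + κ) hsum0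
          linarith
      have e3 : -Real.log (qd x (o x)) ≤ (Dᶜ.indicator c x + κ' / 2) + 
            (D \ hit K).indicator (fun _ => BB) x := by
        by_cases h : x ∈ D
        · rw [indicator_of_notMem (by simpa using h)]
          simp only [qd, h, if_true]
          by_cases h' : x ∈ hit K
          · rw [indicator_of_notMem (fun hh => hh.2 h')]
            simp only [o, h', if_true, qv, Option.elim]
            linarith
          · rw [indicator_of_mem (show x ∈ D \ hit K from ⟨h, h'⟩)]
            simp only [o, h', if_false, qv, Option.elim]
            rw [← hBB]; linarith
        · have h' : x ∉ hit K := by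
            rintro ⟨k, hk, hh⟩; exact h ⟨_, hh⟩
          rw [indicator_of_mem (show x ∈ Dᶜ from h), indicator_of_notMem (fun hh => h hh.1)]
          simp only [qd, h, o, h', if_false, Option.elim, c]
          linarith
      linarith
    have hbase0 : ∀ x, 0 ≤ -Real.log (qz (z x)) + (if z x ≠ z0 then Real.log Zk else 0) := by
      intro x
      have := Real.log_nonpos (hqz (z x)).le (hqz1 (z x))
      split_ifs <;> linarith
    have hbasem : Measurable (fun x => -Real.log (qz (z x)) + 
        (if z x ≠ z0 then Real.log Zk else 0)) :=
      (Measurable.of_discrete (f := fun y : Z => -Real.log (qz y) + 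
        (if y ≠ z0 then Real.log Zk else 0))).comp hz
    have hfkle : ∀ x, ∑ k, ENNReal.ofReal (fk k x) ≤ D.indicator (fun x => ENNReal.ofReal (c x)) x := by
      intro x
      by_cases h : ∃ k : Fin K, x ∈ Xk k
      · obtain ⟨k, hk⟩ := h
        rw [Finset.sum_eq_single k]
        · rw [indicator_of_mem (hXkD k hk)]
          simp only [fk, indicator_of_mem hk]; exact le_rfl
        · intro l _ hl
          have : x ∉ Xk l := fun hx => hl (Fin.ext (hXkinj x _ _ hx hk))
          simp [fk, this]
        · simp
      · have h' : ∀ k : Fin K, x ∉ Xk k := fun k hk => h ⟨k, hk⟩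
        simp [fk, h']
    calc ∫⁻ x, ENNReal.ofReal (-Real.log (Q x (b x))) ∂μ
        ≤ ∫⁻ x, ((ENNReal.ofReal (-Real.log (qz (z x)) + 
            (if z x ≠ z0 then Real.log Zk else 0)) + 
          ENNReal.ofReal (1 + κ) * ∑ k, ENNReal.ofReal (fk k ((g k)⁻¹ • x))) + 
          ((Dᶜ.indicator (fun x => ENNReal.ofReal (c x)) x + ENNReal.ofReal (κ' / 2)) + 
            (D \ hit K).indicator (fun _ => ENNReal.ofReal BB) x)) ∂μ := by
          apply lintegral_mono
          intro x
          refine (ENNReal.ofReal_le_ofReal (hpt x)).trans ?_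
          refine ENNReal.ofReal_add_le.trans (add_le_add ?_ ?_)
          · refine ENNReal.ofReal_add_le.trans (add_le_add le_rfl ?_)
            rw [ENNReal.ofReal_mul (by linarith), ENNReal.ofReal_sum_of_nonneg 
              (fun k _ => hfk0 _ _)]
          · refine ENNReal.ofReal_add_le.trans (add_le_add ?_ ?_)
            · refine ENNReal.ofReal_add_le.trans (add_le_add ?_ le_rfl)
              by_cases h : x ∈ Dᶜ
              · rw [indicator_of_mem h, indicator_of_mem h]
              · rw [indicator_of_notMem h, indicator_of_notMem h]; simp
            · by_cases h : x ∈ D \ hit K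
              · rw [indicator_of_mem h, indicator_of_mem h]
              · rw [indicator_of_notMem h, indicator_of_notMem h]; simp
      _ = ((∫⁻ x, ENNReal.ofReal (-Real.log (qz (z x)) + 
            (if z x ≠ z0 then Real.log Zk else 0)) ∂μ) + 
          ENNReal.ofReal (1 + κ) * ∑ k, ∫⁻ x, ENNReal.ofReal (fk k x) ∂μ) + 
          (((∫⁻ x, Dᶜ.indicator (fun x => ENNReal.ofReal (c x)) x ∂μ) + ENNReal.ofReal (κ' / 2)) + 
            μ (D \ hit K) * ENNReal.ofReal BB) := by
          have m1 : ∀ k, Measurable (fun x => ENNReal.ofReal (fk k ((g k)⁻¹ • x))) := fun k =>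
            ((hfkm k).comp (hact _)).ennreal_ofReal
          have m2 : Measurable (fun x => ∑ k, ENNReal.ofReal (fk k ((g k)⁻¹ • x))) :=
            Finset.measurable_fun_sum _ (fun k _ => m1 k)
          have m3 : Measurable (fun x => ENNReal.ofReal (-Real.log (qz (z x)) +
              (if z x ≠ z0 then Real.log Zk else 0)) +
              ENNReal.ofReal (1 + κ) * ∑ k, ENNReal.ofReal (fk k ((g k)⁻¹ • x))) :=
            hbasem.ennreal_ofReal.add (m2.const_mul _)
          rw [lintegral_add_left m3,
            lintegral_add_left hbasem.ennreal_ofReal, lintegral_const_mul _ m2,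
            lintegral_finsetSum _ (fun k _ => m1 k),
            lintegral_add_right _ (measurable_const.indicator (hDm.diff (hhit K))),
            lintegral_add_right _ measurable_const, lintegral_indicator_const (hDm.diff (hhit K))]
          simp only [lintegral_const, measure_univ, mul_one]
          rw [mul_comm (ENNReal.ofReal BB)]
          congr 4
          funext k
          exact (hμ (g k)⁻¹).lintegral_comp (hfkm k).ennreal_ofReal
      _ ≤ ((∫⁻ x, ENNReal.ofReal (-Real.log (qz (z x)) + 
            (if z x ≠ z0 then Real.log Zk else 0)) ∂μ) + 
          ENNReal.ofReal (1 + κ) * ∫⁻ x, D.indicator (fun x => ENNReal.ofReal (c x)) x ∂μ) + 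
          ((ENNReal.ofReal (1 + κ) * (∫⁻ x, Dᶜ.indicator (fun x => ENNReal.ofReal (c x)) x ∂μ) + ENNReal.ofReal (κ' / 2)) + 
            ENNReal.ofReal (κ' / 2)) := by
          gcongr
          · rw [← lintegral_finsetSum _ (fun k _ => (hfkm k).ennreal_ofReal)]
            exact lintegral_mono hfkle
          · refine le_mul_of_one_le_left (zero_le) ?_
            rw [ENNReal.one_le_ofReal]; linarith
      _ = ((∫⁻ x, ENNReal.ofReal (-Real.log (qz (z x)) + 
            (if z x ≠ z0 then Real.log Zk else 0)) ∂μ) + 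
          ENNReal.ofReal (1 + κ) * ∫⁻ x, ENNReal.ofReal (c x) ∂μ) + ENNReal.ofReal κ' := by
          have : ENNReal.ofReal κ' = ENNReal.ofReal (κ' / 2) + ENNReal.ofReal (κ' / 2) := by
            rw [← ENNReal.ofReal_add (by linarith) (by linarith)]; congr 1; ring
          rw [this]
          have h2 : ∫⁻ x, ENNReal.ofReal (c x) ∂μ = 
              (∫⁻ x, D.indicator (fun x => ENNReal.ofReal (c x)) x ∂μ) + 
              ∫⁻ x, Dᶜ.indicator (fun x => ENNReal.ofReal (c x)) x ∂μ := by
            rw [← lintegral_add_left (hcm.ennreal_ofReal.indicator hDm)]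
            apply lintegral_congr
            intro x
            exact (congrFun (indicator_self_add_compl D (fun x => ENNReal.ofReal (c x))) x).symm
          rw [h2]
          ring
      _ = _ := by
          congr 1
          rw [← lintegral_const_mul _ hcm.ennreal_ofReal, 
            ← lintegral_add_left hbasem.ennreal_ofReal]
          apply lintegral_congr
          intro x
          rw [← ENNReal.ofReal_mul (by linarith), ← ENNReal.ofReal_add (hbase0 x) 
            (mul_nonneg (by linarith) (hc0 x))]
          congr 1
          simp only [c]
          ring

/-- `f` depends only on membership of the point in the finitely many sets of `J`. -/
def DepOn {X R : Type*} (J : Finset (Set X)) (f : X → R) : Prop :=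
  ∀ x y, (∀ j ∈ J, (x ∈ j ↔ y ∈ j)) → f x = f y

lemma DepOn.mono {X R : Type*} {J K : Finset (Set X)} {f : X → R} (h : DepOn J f)
    (hJK : J ⊆ K) : DepOn K f := fun x y hxy => h x y (fun j hj => hxy j (hJK hj))

lemma approx_set {X : Type*} [mX : MeasurableSpace X] (μ : Measure X) [IsFiniteMeasure μ]
    (Y : Set (Set X)) (hY : ∀ s ∈ Y, MeasurableSet s) (B : Set X)
    (hB : MeasurableSet[MeasurableSpace.generateFrom Y] B) :
    ∀ ε : ℝ≥0∞, 0 < ε → ε ≠ ∞ → ∃ (J : Finset (Set X)) (B' : Set X), (↑J : Set (Set X)) ⊆ Y ∧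
      DepOn J (fun x => x ∈ B') ∧ μ (B ∆ B') < ε := by
  classical
  have hle : MeasurableSpace.generateFrom Y ≤ mX := MeasurableSpace.generateFrom_le hY
  induction B, hB using MeasurableSpace.generateFrom_induction with
  | hC t ht _ =>
    intro ε hε hεt
    refine ⟨{t}, t, by simpa using ht, ?_, by simpa using hε⟩
    intro x y h
    exact propext (h t (by simp))
  | empty => 
    intro ε hε hεt
    exact ⟨∅, ∅, by simp, fun x y _ => rfl, by simpa using hε⟩
  | compl t _ ih => 
    intro ε hε hεt
    obtain ⟨J, B', h1, h2, h3⟩ := ih ε hε hεt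
    refine ⟨J, B'ᶜ, h1, ?_, ?_⟩
    · intro x y h
      have := h2 x y h
      simp only [mem_compl_iff]
      exact congrArg Not this
    · rwa [compl_symmDiff_compl]
  | iUnion f hf ih => 
    intro ε hε hεt
    have hfm : ∀ n, MeasurableSet (f n) := fun n => hle _ (hf n)
    have hlim : Filter.Tendsto (fun N => μ ((⋃ n, f n) \ ⋃ n ∈ Finset.range N, f n)) Filter.atTop
        (nhds 0) := by
      have h1 := tendsto_measure_iInter_atTop (μ := μ) 
        (s := fun N => (⋃ n, f n) \ ⋃ n ∈ Finset.range N, f n)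
        (fun N => ((MeasurableSet.iUnion hfm).diff 
          (Finset.measurableSet_biUnion _ (fun n _ => hfm n))).nullMeasurableSet)
        (fun N N' hN x hx => ⟨hx.1, fun h => hx.2 (by
          simp only [mem_iUnion, Finset.mem_range] at h ⊢
          obtain ⟨k, hk, hkk⟩ := h
          exact ⟨k, hk.trans_le hN, hkk⟩)⟩) ⟨0, measure_ne_top _ _⟩
      have h2 : ⋂ N, ((⋃ n, f n) \ ⋃ n ∈ Finset.range N, f n) = ∅ := by
        ext x
        simp only [mem_iInter, mem_sdiff, mem_iUnion, mem_empty_iff_false, iff_false]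
        intro h
        obtain ⟨n, hn⟩ := (h 0).1
        exact (h (n+1)).2 ⟨n, by simp, hn⟩
      rw [h2, measure_empty] at h1
      exact h1
    obtain ⟨N, hN⟩ := (hlim.eventually (gt_mem_nhds (ENNReal.half_pos hε.ne'))).exists
    have hε' : 0 < ε / 2 / (N + 1) := by
      refine ENNReal.div_pos (ENNReal.half_pos hε.ne').ne' ?_
      finiteness
    have hεt' : ε / 2 / (N + 1) ≠ ∞ := by
      refine ENNReal.div_ne_top (by finiteness) (by simp)
    choose J B' h1 h2 h3 using fun n => ih n (ε / 2 / (N + 1)) hε' hεt'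
    refine ⟨(Finset.range N).biUnion J, ⋃ n ∈ Finset.range N, B' n, ?_, ?_, ?_⟩
    · intro s hs
      simp only [Finset.coe_biUnion, mem_iUnion] at hs
      obtain ⟨n, _, hn⟩ := hs
      exact h1 n hn
    · intro x y h
      simp only [mem_iUnion, eq_iff_iff]
      refine exists_congr fun n => exists_congr fun hn => ?_
      have := h2 n x y (fun j hj => h j (Finset.mem_biUnion.2 ⟨n, hn, hj⟩))
      exact Iff.of_eq this
    · have hsub : (⋃ n, f n) ∆ (⋃ n ∈ Finset.range N, B' n) ⊆ 
          ((⋃ n, f n) \ ⋃ n ∈ Finset.range N, f n) ∪ ⋃ n ∈ Finset.range N, (f n ∆ B' n) := by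
        intro x hx
        simp only [mem_union, mem_symmDiff, mem_sdiff, mem_iUnion] at hx ⊢
        grind
      calc _ ≤ _ := measure_mono hsub
        _ ≤ μ ((⋃ n, f n) \ ⋃ n ∈ Finset.range N, f n) + ∑ n ∈ Finset.range N, μ (f n ∆ B' n) :=
          (measure_union_le _ _).trans (add_le_add le_rfl (measure_biUnion_finset_le _ _))
        _ ≤ μ ((⋃ n, f n) \ ⋃ n ∈ Finset.range N, f n) + ∑ n ∈ Finset.range N, ε / 2 / (N + 1) := by
          gcongr with n _
          exact (h3 n).le
        _ ≤ μ ((⋃ n, f n) \ ⋃ n ∈ Finset.range N, f n) + ε / 2 := by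
          gcongr
          rw [Finset.sum_const, Finset.card_range, nsmul_eq_mul]
          calc (N : ℝ≥0∞) * (ε / 2 / (N + 1)) ≤ (N + 1) * (ε / 2 / (N + 1)) := by 
                gcongr; exact le_self_add
            _ ≤ ε / 2 := ENNReal.mul_div_le
        _ < ε := by
          calc _ < ε / 2 + ε / 2 := ENNReal.add_lt_add_right (by finiteness) hN
            _ = ε := ENNReal.add_halves ε

lemma approx_fun {X R : Type*} [mX : MeasurableSpace X] (μ : Measure X) [IsFiniteMeasure μ]
    [Finite R] (Y : Set (Set X)) (hY : ∀ s ∈ Y, MeasurableSet s) (f : X → R) [Nonempty R]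
    (hf : ∀ r, ∃ B, MeasurableSet[MeasurableSpace.generateFrom Y] B ∧ μ ((f ⁻¹' {r}) ∆ B) = 0)
    (ε : ℝ≥0∞) (hε : 0 < ε) : ∃ (J : Finset (Set X)) (f' : X → R), (↑J : Set (Set X)) ⊆ Y ∧
      DepOn J f' ∧ μ {x | f x ≠ f' x} < ε := by
  classical
  cases nonempty_fintype R
  set ε' : ℝ≥0∞ := min ε 1 with hε'def
  have hε'0 : 0 < ε' := lt_min hε one_pos
  have hε't : ε' ≠ ∞ := (lt_of_le_of_lt (min_le_right _ _) ENNReal.one_lt_top).ne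
  have hε' : 0 < ε' / 2 / (Fintype.card R + 1) := 
    ENNReal.div_pos (ENNReal.half_pos hε'0.ne').ne' (by finiteness)
  have hεt' : ε' / 2 / (Fintype.card R + 1) ≠ ∞ := 
      ENNReal.div_ne_top (by finiteness) (by simp)
  have h : ∀ r, ∃ (J : Finset (Set X)) (B' : Set X), (↑J : Set (Set X)) ⊆ Y ∧
      DepOn J (fun x => x ∈ B') ∧ μ ((f ⁻¹' {r}) ∆ B') < ε' / 2 / (Fintype.card R + 1) := by
    intro r
    obtain ⟨B, hB, h0⟩ := hf r
    obtain ⟨J, B', h1, h2, h3⟩ := approx_set μ Y hY B hB _ hε' hεt'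
    refine ⟨J, B', h1, h2, ?_⟩
    calc _ ≤ μ ((f ⁻¹' {r}) ∆ B) + μ (B ∆ B') := measure_symmDiff_le _ _ _
      _ = μ (B ∆ B') := by rw [h0, zero_add]
      _ < _ := h3
  choose J B' h1 h2 h3 using h
  let r0 : R := Classical.arbitrary R
  let Φ : Set R → R := fun V => if h : ∃ r, V = {r} then h.choose else r0
  have hΦ : ∀ r, Φ {r} = r := by
    intro r
    have h : ∃ r', ({r} : Set R) = {r'} := ⟨r, rfl⟩
    simp only [Φ, dif_pos h]
    exact (singleton_eq_singleton_iff.1 h.choose_spec).symm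
  refine ⟨Finset.univ.biUnion J, fun x => Φ {r | x ∈ B' r}, ?_, ?_, ?_⟩
  · intro s hs
    simp only [Finset.coe_biUnion, mem_iUnion] at hs
    obtain ⟨n, _, hn⟩ := hs
    exact h1 n hn
  · intro x y h
    have : {r | x ∈ B' r} = {r | y ∈ B' r} := by
      ext r
      exact Iff.of_eq (h2 r x y (fun j hj => h j (Finset.mem_biUnion.2 ⟨r, Finset.mem_univ _, hj⟩)))
    simp only [this]
  · have hsub : {x | f x ≠ Φ {r | x ∈ B' r}} ⊆ ⋃ r, (f ⁻¹' {r}) ∆ B' r := by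
      intro x hx
      by_contra hcon
      apply hx
      have : {r | x ∈ B' r} = {f x} := by
        ext r
        simp only [mem_iUnion, mem_symmDiff, mem_preimage, mem_singleton_iff, not_exists] at hcon
        have := hcon r
        simp only [mem_setOf_eq, mem_singleton_iff]
        grind
      rw [this, hΦ]
    calc _ ≤ _ := measure_mono hsub
      _ ≤ ∑ r, μ ((f ⁻¹' {r}) ∆ B' r) := measure_iUnion_fintype_le _ _
      _ ≤ ∑ r : R, ε' / 2 / (Fintype.card R + 1) := by
        gcongr with r _
        exact (h3 r).le
      _ < ε := by
        rw [Finset.sum_const, Finset.card_univ, nsmul_eq_mul]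
        calc (Fintype.card R : ℝ≥0∞) * (ε' / 2 / (Fintype.card R + 1)) 
            ≤ (Fintype.card R + 1) * (ε' / 2 / (Fintype.card R + 1)) := by 
                gcongr; exact le_self_add
            _ ≤ ε' / 2 := ENNReal.mul_div_le
            _ < ε' := ENNReal.half_lt_self hε'0.ne' hε't
            _ ≤ ε := min_le_left _ _

/-- pattern -/
noncomputable def pat {X : Type*} (J : Finset (Set X)) (x : X) : J → Bool := 
  open Classical in fun j => decide (x ∈ j.1)

lemma pat_eq_iff {X : Type*} {J : Finset (Set X)} {x y : X} : pat J x = pat J y ↔ 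
    ∀ j ∈ J, (x ∈ j ↔ y ∈ j) := by
  simp [pat, funext_iff]

lemma DepOn.measurable {X R : Type*} {M : MeasurableSpace X} [MeasurableSpace R] 
    {J : Finset (Set X)} {f : X → R} (h : DepOn J f) (hJ : ∀ j ∈ J, MeasurableSet[M] j) :
    Measurable[M] f := by
  classical
  have hpat : Measurable[M] (pat J) := by
    refine measurable_pi_iff.2 (fun j => ?_)
    refine measurable_to_bool ?_
    have : (fun x => pat J x j) ⁻¹' {true} = j.1 := by ext x; simp [pat]
    rw [this]; exact hJ j j.2
  rcases isEmpty_or_nonempty X with hX | hX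
  · exact measurable_of_empty f
  haveI : Nonempty R := ⟨f (Classical.arbitrary X)⟩
  obtain ⟨ψ, rfl⟩ := (Function.factorsThrough_iff (g := f) (f := pat J)).1 
    (fun x y hxy => h x y (pat_eq_iff.1 hxy))
  exact Measurable.of_discrete.comp hpat

lemma DepOn.continuous {X R : Type*} [TopologicalSpace X] [TopologicalSpace R] 
    {J : Finset (Set X)} {f : X → R} (h : DepOn J f) (hJ : ∀ j ∈ J, IsClopen j) :
    Continuous f := by
  classical
  have hpat : Continuous (pat J) := by
    refine continuous_pi (fun j => ?_)
    rw [continuous_discrete_rng]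
    have h1 : IsClopen ((fun x => pat J x j) ⁻¹' {true}) := by
      have : (fun x => pat J x j) ⁻¹' {true} = j.1 := by ext x; simp [pat]
      rw [this]; exact hJ j j.2
    rintro (_ | _)
    · have : (fun x => pat J x j) ⁻¹' {false} = ((fun x => pat J x j) ⁻¹' {true})ᶜ := by
        ext x; simp
      rw [this]
      exact h1.compl.isOpen
    · exact h1.isOpen
  rcases isEmpty_or_nonempty X with hX | hX
  · exact continuous_iff_continuousAt.2 (fun x => hX.elim x)
  haveI : Nonempty R := ⟨f (Classical.arbitrary X)⟩
  obtain ⟨ψ, rfl⟩ := (Function.factorsThrough_iff (g := f) (f := pat J)).1 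
    (fun x y hxy => h x y (pat_eq_iff.1 hxy))
  exact continuous_of_discreteTopology.comp hpat

lemma q1_lemma {X : Type*} {m : MeasurableSpace X} [mX : MeasurableSpace X] (hm : m ≤ mX)
    (μ : Measure X) [IsProbabilityMeasure μ] (idx : X → ℕ) (hidx : Measurable idx) (c : ℝ≥0∞)
    (hc : condEnt m μ (fun i => idx ⁻¹' {i}) < c) (N : ℕ) (abar : ℕ → Fin N) :
    ∃ (M : ℕ) (ρ : X → (Fin N → Fin (M + 1))) (q : (Fin N → Fin (M + 1)) → Fin N → ℝ),
      Measurable[m] ρ ∧ (∀ r k, 0 < q r k) ∧ (∀ r, ∑ k, q r k ≤ 1) ∧ 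
      ∫⁻ x, ENNReal.ofReal (-Real.log (q (ρ x) (abar (idx x)))) ∂μ < c := by
  classical
  have hset : ∀ i, MeasurableSet (idx ⁻¹' {i}) := fun i => hidx (MeasurableSet.of_discrete)
  have ham : Measurable (fun x => abar (idx x)) := Measurable.of_discrete.comp hidx
  let e : ℕ → X → ℝ := fun i => (idx ⁻¹' {i}).indicator (fun _ => (1 : ℝ))
  let ek : Fin N → X → ℝ := fun k => ((fun x => abar (idx x)) ⁻¹' {k}).indicator (fun _ => (1 : ℝ))
  have hsetk : ∀ k, MeasurableSet ((fun x => abar (idx x)) ⁻¹' {k}) := 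
    fun k => ham (MeasurableSet.of_discrete)
  have hei : ∀ t, Integrable (e t) μ := fun t => (integrable_const (1 : ℝ)).indicator (hset t)
  have heki : ∀ t, Integrable (ek t) μ := fun t => (integrable_const (1 : ℝ)).indicator (hsetk t)
  have he0 : ∀ t x, 0 ≤ e t x := fun t x => indicator_nonneg (fun _ _ => zero_le_one) x
  have hem : ∀ t, Measurable (e t) := fun t => measurable_const.indicator (hset t)
  let p : ℕ → X → ℝ := fun i => μ[e i | m]
  let ph : Fin N → X → ℝ := fun k => μ[ek k | m]
  have hp0 : ∀ᵐ x ∂μ, ∀ i, 0 ≤ p i x := ae_all_iff.2 fun i => 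
    condExp_nonneg (Filter.Eventually.of_forall (he0 i))
  have hph0 : ∀ᵐ x ∂μ, ∀ k, 0 ≤ ph k x := ae_all_iff.2 fun i => 
    condExp_nonneg (Filter.Eventually.of_forall 
      (fun x => indicator_nonneg (fun _ _ => zero_le_one) x))
  have hpph : ∀ᵐ x ∂μ, ∀ i, p i x ≤ ph (abar i) x := ae_all_iff.2 fun i => by
    refine condExp_mono (hei i) (heki _) (Filter.Eventually.of_forall ?_)
    intro x
    refine indicator_le_indicator_of_subset ?_ (fun _ => zero_le_one) x
    intro y hy
    simp only [mem_preimage, mem_singleton_iff] at hy ⊢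
    rw [hy]
  have hphs : ∀ᵐ x ∂μ, ∑ k, ph k x = 1 := by
    have h1 := condExp_finsetSum (μ := μ) (s := Finset.univ) (f := ek) (fun k _ => heki k) m
    have h2 : (∑ k, ek k) = fun _ => (1 : ℝ) := by
      funext x
      simp [ek, indicator_apply]
    rw [h2, condExp_const hm] at h1
    filter_upwards [h1] with x hx
    rw [hx, Finset.sum_apply]
  obtain ⟨M, hM0, hM⟩ : ∃ M : ℕ, 0 < M ∧ condEnt m μ (fun i => idx ⁻¹' {i}) + 
      ENNReal.ofReal (Real.log (((M : ℝ) + N) / M)) < c := by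
    have hlim : Filter.Tendsto (fun M : ℕ => Real.log (((M : ℝ) + N) / M)) Filter.atTop (nhds 0) := by
      have h1 : Filter.Tendsto (fun M : ℕ => (1 : ℝ) + N / M) Filter.atTop (nhds (1 + 0)) :=
        tendsto_const_nhds.add (tendsto_const_div_atTop_nhds_zero_nat (N : ℝ))
      rw [add_zero] at h1
      have h2 := (Real.continuousAt_log (one_ne_zero)).tendsto.comp h1
      rw [Real.log_one] at h2
      refine h2.congr' ?_
      filter_upwards [Filter.eventually_gt_atTop 0] with M hM
      have : (0 : ℝ) < M := by exact_mod_cast hM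
      simp only [comp_apply]
      congr 1
      field_simp
    have h3 := (ENNReal.tendsto_ofReal hlim).const_add (condEnt m μ (fun i => idx ⁻¹' {i}))
    rw [ENNReal.ofReal_zero, add_zero] at h3
    obtain ⟨M, h, h'⟩ := ((h3.eventually (gt_mem_nhds hc)).and (Filter.eventually_gt_atTop 0)).exists
    exact ⟨M, h', h⟩
  have hM0' : (0 : ℝ) < M := by exact_mod_cast hM0
  have hphm : ∀ k, Measurable[m] (ph k) := fun k => stronglyMeasurable_condExp.measurable
  let ρ : X → (Fin N → Fin (M + 1)) := fun x k => ⟨min ⌊ph k x * M⌋₊ M, by omega⟩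
  let q : (Fin N → Fin (M + 1)) → Fin N → ℝ := fun r k => 
    (((r k : ℕ) : ℝ) + 1) / ∑ l, (((r l : ℕ) : ℝ) + 1)
  have hsum0 : ∀ (r : Fin N → Fin (M + 1)) (k : Fin N), 0 < ∑ l, (((r l : ℕ) : ℝ) + 1) := by
    intro r k
    exact Finset.sum_pos (fun l _ => by positivity) ⟨k, Finset.mem_univ k⟩
  have hρ : Measurable[m] ρ := by
    refine @measurable_pi_lambda X (Fin N) (fun _ => Fin (M + 1)) m _ ρ (fun k => ?_)
    have h0 : Measurable (fun t : ℝ => ⌊t * M⌋₊) := Nat.measurable_floor.comp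
      (measurable_id.mul_const (M : ℝ))
    have h1 : Measurable[m] (fun x => ⌊ph k x * M⌋₊) := h0.comp (hphm k)
    exact (Measurable.of_discrete (f := fun n : ℕ => (⟨min n M, by omega⟩ : Fin (M + 1)))).comp h1
  have hq0 : ∀ r k, 0 < q r k := fun r k => div_pos (by positivity) (hsum0 r k)
  have hqs : ∀ r, ∑ k, q r k ≤ 1 := by
    intro r
    simp only [q]
    rw [← Finset.sum_div]
    exact div_self_le_one _
  refine ⟨M, ρ, q, hρ, hq0, hqs, ?_⟩
  refine lt_of_le_of_lt ?_ hM
  set ℓ : ℝ := Real.log (((M : ℝ) + N) / M) with hℓ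
  have hℓ0 : 0 ≤ ℓ := by
    apply Real.log_nonneg
    rw [le_div_iff₀ hM0']; simp
  have key : ∀ᵐ x ∂μ, ∀ i, ENNReal.ofReal (p i x) * ENNReal.ofReal (-Real.log (q (ρ x) (abar i))) ≤
      ENNReal.ofReal (Real.negMulLog (p i x)) + ENNReal.ofReal (p i x) * ENNReal.ofReal ℓ := by
    filter_upwards [hp0, hph0, hpph, hphs] with x h0 h1 h2 h3 i
    have hle1 : ∀ k, ph k x ≤ 1 := fun k => by
      rw [← h3]
      exact Finset.single_le_sum (fun l _ => h1 l) (Finset.mem_univ k)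
    have hfl : ∀ k, ((ρ x k : ℕ) : ℝ) = ⌊ph k x * M⌋₊ := by
      intro k
      simp only [ρ]
      congr 1
      apply min_eq_left
      apply Nat.floor_le_of_le
      nlinarith [hle1 k]
    rcases (h0 i).eq_or_lt with h | h
    · rw [← h]; simp
    · have hden : ∑ l, (((ρ x l : ℕ) : ℝ) + 1) ≤ M + N := by
        calc _ ≤ ∑ l, (ph l x * M + 1) := by
              gcongr with l _
              rw [hfl]
              exact Nat.floor_le (mul_nonneg (h1 l) hM0'.le)
          _ = M + N := by
              rw [Finset.sum_add_distrib, ← Finset.sum_mul, h3]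
              simp
      have hql : p i x * (M / (M + N)) ≤ q (ρ x) (abar i) := by
        simp only [q]
        rw [← mul_div_assoc]
        apply div_le_div₀ (by positivity) _ (hsum0 _ (abar i)) hden
        rw [hfl]
        refine le_trans ?_ (Nat.lt_floor_add_one _).le
        exact mul_le_mul_of_nonneg_right (h2 i) hM0'.le
      have hlog : -Real.log (q (ρ x) (abar i)) ≤ -Real.log (p i x) + ℓ := by
        have hpos : 0 < (M : ℝ) / (M + N) := by positivity
        have h5 := Real.log_le_log (mul_pos h hpos) hql
        rw [Real.log_mul h.ne' hpos.ne'] at h5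
        have h6 : Real.log ((M : ℝ) / (M + N)) = -ℓ := by
          rw [hℓ, ← Real.log_inv, inv_div]
        linarith
      rw [← ENNReal.ofReal_mul (h0 i), ← ENNReal.ofReal_mul (h0 i)]
      refine le_trans (ENNReal.ofReal_le_ofReal ?_) ENNReal.ofReal_add_le
      rw [Real.negMulLog]
      nlinarith
  have hgm : ∀ i, Measurable[m] (fun x => ENNReal.ofReal (-Real.log (q (ρ x) (abar i)))) := fun i =>
    (Measurable.of_discrete (f := fun r => ENNReal.ofReal (-Real.log (q r (abar i))))).comp hρ
  have hpm : ∀ i, Measurable (p i) := fun i => (stronglyMeasurable_condExp.mono hm).measurable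
  have hone : ∀ x, ∑' i, ENNReal.ofReal (e i x) = 1 := by
    intro x
    rw [tsum_eq_single (idx x)]
    · simp [e]
    · intro i hi
      simp [e, indicator_apply, hi.symm]
  calc ∫⁻ x, ENNReal.ofReal (-Real.log (q (ρ x) (abar (idx x)))) ∂μ 
      = ∫⁻ x, ∑' i, ENNReal.ofReal (e i x) * ENNReal.ofReal (-Real.log (q (ρ x) (abar i))) ∂μ := by
        apply lintegral_congr
        intro x
        rw [tsum_eq_single (idx x)]
        · simp [e]
        · intro i hi
          simp [e, indicator_apply, hi.symm]
    _ = ∑' i, ∫⁻ x, ENNReal.ofReal (e i x) * ENNReal.ofReal (-Real.log (q (ρ x) (abar i))) ∂μ := by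
        apply lintegral_tsum
        intro i
        exact ((hem i).ennreal_ofReal.mul ((hgm i).mono hm le_rfl)).aemeasurable
    _ = ∑' i, ∫⁻ x, ENNReal.ofReal (p i x) * ENNReal.ofReal (-Real.log (q (ρ x) (abar i))) ∂μ := by
        congr 1; funext i
        exact (lintegral_condExp_mul' hm μ (hei i) (hem i) (he0 i) (hgm i)).symm
    _ = ∫⁻ x, ∑' i, ENNReal.ofReal (p i x) * ENNReal.ofReal (-Real.log (q (ρ x) (abar i))) ∂μ := by
        rw [lintegral_tsum]
        intro i
        exact ((hpm i).ennreal_ofReal.mul ((hgm i).mono hm le_rfl)).aemeasurable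
    _ ≤ ∫⁻ x, ∑' i, (ENNReal.ofReal (Real.negMulLog (p i x)) + 
          ENNReal.ofReal (p i x) * ENNReal.ofReal ℓ) ∂μ := by
        apply lintegral_mono_ae
        filter_upwards [key] with x hx
        exact ENNReal.tsum_le_tsum hx
    _ = ∫⁻ x, ((∑' i, ENNReal.ofReal (Real.negMulLog (p i x))) + 
          ∑' i, ENNReal.ofReal (p i x) * ENNReal.ofReal ℓ) ∂μ := by
        apply lintegral_congr; intro x
        exact ENNReal.tsum_add
    _ = (∫⁻ x, (∑' i, ENNReal.ofReal (Real.negMulLog (p i x))) ∂μ) + 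
          ∫⁻ x, ∑' i, ENNReal.ofReal (p i x) * ENNReal.ofReal ℓ ∂μ := by
        apply lintegral_add_right
        exact Measurable.tsum (fun i => (hpm i).ennreal_ofReal.mul_const _)
    _ = condEnt m μ (fun i => idx ⁻¹' {i}) + ENNReal.ofReal ℓ := by
        congr 1
        rw [lintegral_tsum (fun i => ((hpm i).ennreal_ofReal.mul_const _).aemeasurable)]
        have : ∀ i, ∫⁻ x, ENNReal.ofReal (p i x) * ENNReal.ofReal ℓ ∂μ = 
            ∫⁻ x, ENNReal.ofReal (e i x) * ENNReal.ofReal ℓ ∂μ := fun i =>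
          lintegral_condExp_mul' hm μ (hei i) (hem i) (he0 i) measurable_const
        simp_rw [this]
        rw [← lintegral_tsum (fun i => ((hem i).ennreal_ofReal.mul_const _).aemeasurable)]
        simp_rw [ENNReal.tsum_mul_right, hone]
        simp

theorem finite_data {G X L : Type*} (F : MeasurableSpace X) [Group G] [MulAction G X] 
    [mX : MeasurableSpace X]
    (C : Set (Set X)) (hC : ∀ A ∈ C, MeasurableSet A) (hF : F = MeasurableSpace.generateFrom C)
    (hact : ∀ g : G, Measurable (fun x : X => g • x)) (μ : Measure X) [IsProbabilityMeasure μ]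
    [Finite L] [MeasurableSpace L] [DiscreteMeasurableSpace L] (P : X → L) (hP : Measurable P)
    (c : ℝ≥0∞) (hrk : rokhlin G F μ < c) (ε1 : ℝ≥0∞) (hε1 : 0 < ε1) :
    ∃ (N : ℕ) (a : X → Fin N) (J K : Finset (Set X)) (T : Finset G) 
      (ψ : (T → Fin N) → (J → Bool) → (K → Bool) → L) (q : (J → Bool) → (K → Bool) → Fin N → ℝ),
      Measurable a ∧ (↑J : Set (Set X)) ⊆ C ∧ 
      (∀ s ∈ K, MeasurableSet s ∧ ∀ g : G, (fun x => g • x) ⁻¹' s = s) ∧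
      μ {x | P x ≠ ψ (fun t => a (t.1 • x)) (pat J x) (pat K x)} < ε1 ∧
      (∀ r r' k, 0 < q r r' k) ∧ (∀ r r', ∑ k, q r r' k ≤ 1) ∧ 
      ∫⁻ x, ENNReal.ofReal (-Real.log (q (pat J x) (pat K x) (a x))) ∂μ < c := by
  classical
  obtain ⟨x₀⟩ : Nonempty X := μ.nonempty_of_neZero
  haveI : Nonempty L := ⟨P x₀⟩
  obtain ⟨h, ⟨α, hα, hgen, rfl⟩, hlt⟩ := sInf_lt_iff.1 hrk
  set Inv : Set (Set X) := {A | MeasurableSet A ∧ ∀ g : G, (fun x => g • x) ⁻¹' A = A} with hInv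
  have hI : invSigma G X = MeasurableSpace.generateFrom Inv := rfl
  have hm : F ⊔ invSigma G X = MeasurableSpace.generateFrom (C ∪ Inv) := by
    rw [hF, hI, MeasurableSpace.generateFrom_sup_generateFrom]
  have hmle : F ⊔ invSigma G X ≤ mX := by
    rw [hm]; apply MeasurableSpace.generateFrom_le
    rintro s (hs | hs)
    · exact hC s hs
    · exact hs.1
  set A1 : Set (Set X) := {B | ∃ (g : G), ∃ A ∈ range α, B = (fun x => g • x) ⁻¹' A} with hA1
  have hM : sigmaG G (Set.range α) ⊔ F ⊔ invSigma G X = 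
      MeasurableSpace.generateFrom (A1 ∪ (C ∪ Inv)) := by
    rw [sup_assoc, hm, sigmaG, MeasurableSpace.generateFrom_sup_generateFrom]
  rw [hM] at hgen
  have hYm : ∀ s ∈ A1 ∪ (C ∪ Inv), MeasurableSet s := by
    rintro s (⟨g, A, ⟨i, rfl⟩, rfl⟩ | hs | hs)
    · exact hact g (hα.1 i)
    · exact hC s hs
    · exact hs.1
  -- decoding
  obtain ⟨J0, P', hJ0, hdep, hPP⟩ := approx_fun μ (A1 ∪ (C ∪ Inv)) hYm P 
    (fun r => hgen _ (hP MeasurableSet.of_discrete)) ε1 hε1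
  have hex : ∀ x, ∃ i, x ∈ α i := fun x => by
    have : x ∈ ⋃ i, α i := by rw [hα.2.2]; trivial
    simpa using this
  choose idx hidx using hex
  have hidxeq : ∀ i, idx ⁻¹' {i} = α i := by
    intro i
    ext x
    simp only [mem_preimage, mem_singleton_iff]
    constructor
    · rintro rfl; exact hidx x
    · intro hx
      by_contra hne
      exact Set.disjoint_left.1 (hα.2.1 hne) (hidx x) hx
  have hidxm : Measurable idx := measurable_to_countable' (fun i => by rw [hidxeq]; exact hα.1 i)
  have hpr : ∀ s : Set X, ∃ p : G × ℕ, s ∈ A1 → s = (fun x => p.1 • x) ⁻¹' (α p.2) := by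
    intro s
    by_cases hs : s ∈ A1
    · obtain ⟨g, A, ⟨i, rfl⟩, rfl⟩ := hs
      exact ⟨(g, i), fun _ => rfl⟩
    · exact ⟨(1, 0), fun h => absurd h hs⟩
  choose p hp using hpr
  set n : ℕ := J0.sup (fun s => (p s).2) + 1 with hn
  let abar : ℕ → Fin (n + 1) := fun i => ⟨min i n, by omega⟩
  let a : X → Fin (n + 1) := fun x => abar (idx x)
  have ham : Measurable a := (Measurable.of_discrete (f := abar)).comp hidxm
  set T : Finset G := J0.image (fun s => (p s).1) with hT
  have hent : condEnt (F ⊔ invSigma G X) μ (fun i => idx ⁻¹' {i}) < c := by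
    have : (fun i => idx ⁻¹' {i}) = α := funext hidxeq
    rw [this]; exact hlt
  obtain ⟨M, ρ, q0, hρ, hq0, hq0s, h_intg⟩ := q1_lemma hmle μ idx hidxm c hent (n + 1) abar
  -- approximate ρ
  let Bq : ℝ≥0∞ := ∑ r, ∑ k, ENNReal.ofReal (-Real.log (q0 r k))
  have hBq : ∀ r k, ENNReal.ofReal (-Real.log (q0 r k)) ≤ Bq := by
    intro r k
    refine le_trans ?_ (Finset.single_le_sum (f := fun r => ∑ k, ENNReal.ofReal (-Real.log (q0 r k)))
      (fun _ _ => zero_le) (Finset.mem_univ r))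
    exact Finset.single_le_sum (f := fun k => ENNReal.ofReal (-Real.log (q0 r k)))
      (fun _ _ => zero_le) (Finset.mem_univ k)
  have hBqt : Bq ≠ ∞ := by
    simp only [Bq]
    refine ENNReal.sum_ne_top.2 (fun r _ => ENNReal.sum_ne_top.2 (fun k _ => ENNReal.ofReal_ne_top))
  obtain ⟨ε2, hε2, hε2c⟩ : ∃ ε2 : ℝ≥0∞, 0 < ε2 ∧ 
      (∫⁻ x, ENNReal.ofReal (-Real.log (q0 (ρ x) (abar (idx x)))) ∂μ) + Bq * ε2 < c := by
    have h1 : Filter.Tendsto (fun ε : ℝ≥0∞ => 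
        (∫⁻ x, ENNReal.ofReal (-Real.log (q0 (ρ x) (abar (idx x)))) ∂μ) + Bq * ε) (nhds 0) 
        (nhds ((∫⁻ x, ENNReal.ofReal (-Real.log (q0 (ρ x) (abar (idx x)))) ∂μ) + Bq * 0)) :=
      (ENNReal.Tendsto.const_mul Filter.tendsto_id (Or.inr hBqt)).const_add _
    rw [mul_zero, add_zero] at h1
    have h2 := h1.eventually (gt_mem_nhds h_intg)
    have h3 : ∀ᶠ ε in nhdsWithin (0:ℝ≥0∞) (Ioi 0), (∫⁻ x, ENNReal.ofReal (-Real.log (q0 (ρ x) (abar (idx x)))) ∂μ) + Bq * ε < c := 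
      h2.filter_mono nhdsWithin_le_nhds
    obtain ⟨ε, h4, h5⟩ := (h3.and self_mem_nhdsWithin).exists
    exact ⟨ε, h5, h4⟩
  obtain ⟨J1, ρ', hJ1, hdep1, hρρ⟩ := approx_fun μ (C ∪ Inv) 
    (fun s hs => hYm s (Or.inr hs)) ρ 
    (fun r => ⟨ρ ⁻¹' {r}, by rw [← hm]; exact hρ MeasurableSet.of_discrete, by simp⟩) ε2 hε2
  let J : Finset (Set X) := (J0 ∪ J1).filter (· ∈ C)
  let K : Finset (Set X) := (J0 ∪ J1).filter (· ∈ Inv)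
  have hJK : ∀ x y, pat J x = pat J y → pat K x = pat K y → ∀ s ∈ J0 ∪ J1, s ∈ C ∪ Inv → 
      (x ∈ s ↔ y ∈ s) := by
    intro x y h1 h2 s hs hs'
    rw [pat_eq_iff] at h1 h2
    rcases hs' with h | h
    · exact h1 s (Finset.mem_filter.2 ⟨hs, h⟩)
    · exact h2 s (Finset.mem_filter.2 ⟨hs, h⟩)
  have hfac1 : Function.FactorsThrough P' 
      (fun x => ((fun t : T => a (t.1 • x)), pat J x, pat K x)) := by
    intro x y hxy
    simp only [Prod.mk.injEq] at hxy
    obtain ⟨h1, h2, h3⟩ := hxy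
    apply hdep
    intro s hs
    rcases hJ0 hs with h | h
    · rw [hp s h]
      have h4 := congrFun h1 ⟨(p s).1, Finset.mem_image.2 ⟨s, hs, rfl⟩⟩
      simp only [a, abar, Fin.mk.injEq] at h4
      have h5 : (p s).2 < n := by
        have := Finset.le_sup (f := fun s => (p s).2) hs
        omega
      rw [← hidxeq]
      simp only [mem_preimage, mem_singleton_iff]
      omega
    · exact hJK x y h2 h3 s (Finset.mem_union_left _ hs) h
  have hfac2 : Function.FactorsThrough ρ' (fun x => (pat J x, pat K x)) := by
    intro x y hxy
    simp only [Prod.mk.injEq] at hxy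
    apply hdep1
    intro s hs
    exact hJK x y hxy.1 hxy.2 s (Finset.mem_union_right _ hs) (hJ1 hs)
  obtain ⟨ψ, hψ⟩ := (Function.factorsThrough_iff _).1 hfac1
  haveI : Nonempty (Fin (n+1) → Fin (M + 1)) := ⟨ρ x₀⟩
  obtain ⟨θ, hθ⟩ := (Function.factorsThrough_iff _).1 hfac2
  refine ⟨n + 1, a, J, K, T, fun t r r' => ψ (t, r, r'), fun r r' => q0 (θ (r, r')), ham, ?_, ?_, ?_,
    fun r r' k => hq0 _ _, fun r r' => hq0s _, ?_⟩
  · intro s hs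
    exact (Finset.mem_filter.1 hs).2
  · intro s hs
    exact (Finset.mem_filter.1 hs).2
  · have : ∀ x, ψ (fun t => a (t.1 • x), pat J x, pat K x) = P' x := fun x => by rw [hψ]; rfl
    simp only [this]
    exact hPP
  · have hθ' : ∀ x, θ (pat J x, pat K x) = ρ' x := fun x => by rw [hθ]; rfl
    simp only [hθ']
    refine lt_of_le_of_lt ?_ hε2c
    have hρ'm : Measurable ρ' := hdep1.measurable (fun s hs => hYm s (Or.inr (hJ1 hs)))
    have hρm : Measurable ρ := hρ.mono hmle le_rfl
    have hbad : MeasurableSet {x | ρ x ≠ ρ' x} := 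
      (measurableSet_eq_fun hρm hρ'm).compl
    calc ∫⁻ x, ENNReal.ofReal (-Real.log (q0 (ρ' x) (a x))) ∂μ 
        ≤ ∫⁻ x, (ENNReal.ofReal (-Real.log (q0 (ρ x) (a x))) + 
            {x | ρ x ≠ ρ' x}.indicator (fun _ => Bq) x) ∂μ := by
          apply lintegral_mono
          intro x
          by_cases h : ρ x = ρ' x
          · simp only [h]; exact le_self_add
          · beta_reduce; rw [indicator_of_mem (show x ∈ {x | ρ x ≠ ρ' x} from h)]
            exact (hBq _ _).trans le_add_self
      _ = (∫⁻ x, ENNReal.ofReal (-Real.log (q0 (ρ x) (a x))) ∂μ) + Bq * μ {x | ρ x ≠ ρ' x} := by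
          rw [lintegral_add_right _ (measurable_const.indicator hbad), 
            lintegral_indicator_const hbad]
      _ ≤ _ := by gcongr

lemma measurableSet_sat {G X : Type*} [Group G] [Countable G] [MulAction G X] {M : MeasurableSpace X}
    (hM : InvariantAlg G M) {A : Set X} (hA : MeasurableSet[M] A) : 
    MeasurableSet[M] {x | ∃ g : G, g • x ∈ A} := by
  have : {x | ∃ g : G, g • x ∈ A} = ⋃ g : G, (fun x => g • x) ⁻¹' A := by ext x; simp
  rw [this]
  exact MeasurableSet.iUnion (fun g => hM g A hA)

lemma measurableSet_forall_none {G X : Type*} [Group G] [Countable G] [MulAction G X] 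
    [mX : MeasurableSpace X] (hinv : InvariantAlg G mX) {A : Set X} (hA : MeasurableSet A) : 
    MeasurableSet[invSigma G X] {x | ∀ g : G, g • x ∈ A} := by
  apply measurableSet_invSigma
  · have : {x | ∀ g : G, g • x ∈ A} = ⋂ g : G, (fun x => g • x) ⁻¹' A := by ext x; simp
    rw [this]
    exact MeasurableSet.iInter (fun g => hinv g A hA)
  · intro h
    ext x
    simp only [mem_preimage, mem_setOf_eq]
    constructor
    · intro hx g; simpa [mul_smul] using hx (g * h⁻¹)
    · intro hx g; simpa [mul_smul] using hx (g * h)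

lemma transversal_null {G X : Type*} [Group G] [Countable G] [MulAction G X] 
    [mX : MeasurableSpace X] (μ : Measure X) [IsProbabilityMeasure μ] (hμ : IsPmp G μ)
    (hap : Aperiodic G μ) (B : ℕ → Set X) (hB : ∀ n, MeasurableSet (B n))
    (hsep : ∀ x y, (∀ n, x ∈ B n ↔ y ∈ B n) → x = y) (A : Set X) (hA : MeasurableSet A)
    (hone : ∀ x ∈ A, ∀ g : G, g • x ∈ A → g • x = x) : μ A = 0 := by
  classical
  have hact : ∀ g : G, Measurable (fun x : X => g • x) := fun g => (hμ g).measurable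
  obtain ⟨g, hg⟩ := exists_surjective_nat G
  have heq : ∀ i j, MeasurableSet {x : X | g i • x = g j • x} := by
    intro i j
    have : {x | g i • x = g j • x} = ⋂ n, {x | g i • x ∈ B n ↔ g j • x ∈ B n} := by
      ext x
      simp only [mem_setOf_eq, mem_iInter]
      exact ⟨fun h n => by rw [h], fun h => hsep _ _ h⟩
    rw [this]
    refine MeasurableSet.iInter (fun n => ?_)
    have h1 : MeasurableSet {x | g i • x ∈ B n} := hact _ (hB n)
    have h2 : MeasurableSet {x | g j • x ∈ B n} := hact _ (hB n)
    exact h1.iff h2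
  let E : ℕ → Set X := fun j => {x | x ∈ A ∧ ∀ i < j, g i • x ≠ g j • x}
  have hE : ∀ j, MeasurableSet (E j) := by
    intro j
    have : E j = A ∩ ⋂ i : Fin j, {x | g i • x = g j • x}ᶜ := by
      ext x
      simp only [E, mem_setOf_eq, mem_inter_iff, mem_iInter, mem_compl_iff]
      exact and_congr Iff.rfl ⟨fun h i => h i i.2, fun h i hi => h ⟨i, hi⟩⟩
    rw [this]
    exact hA.inter (MeasurableSet.iInter fun i => (heq i j).compl)
  let E' : ℕ → Set X := fun j => (fun x => (g j)⁻¹ • x) ⁻¹' (E j)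
  have hE' : ∀ j, MeasurableSet (E' j) := fun j => hact _ (hE j)
  have hdisj : Pairwise (Function.onFun Disjoint E') := by
    have key : ∀ j k, j < k → ∀ x, x ∈ E' j → x ∉ E' k := by
      intro j k hjk x hx hx'
      have h1 : (g j)⁻¹ • x ∈ E j := hx
      have h2 : (g k)⁻¹ • x ∈ E k := hx'
      have h3 : ((g k)⁻¹ * g j) • ((g j)⁻¹ • x) = (g k)⁻¹ • x := by
        rw [mul_smul, smul_inv_smul]
      have h4 := hone _ h1.1 ((g k)⁻¹ * g j) (by rw [h3]; exact h2.1)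
      rw [h3] at h4
      apply h2.2 j hjk
      rw [smul_inv_smul, h4, smul_inv_smul]
    intro j k hjk
    rw [onFun, Set.disjoint_left]
    intro x hx hx'
    rcases lt_or_gt_of_ne hjk with h | h
    · exact key j k h x hx hx'
    · exact key k j h x hx' hx
  have hsum : ∑' j, μ (E j) ≤ 1 := by
    have : ∀ j, μ (E j) = μ (E' j) := fun j => 
      ((hμ (g j)⁻¹).measure_preimage (hE j).nullMeasurableSet).symm
    simp_rw [this]
    rw [← measure_iUnion hdisj hE']
    exact prob_le_one
  have h_intg : ∑' j, μ (E j) = ∫⁻ x, ∑' j, (E j).indicator (fun _ => (1 : ℝ≥0∞)) x ∂μ := by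
    rw [lintegral_tsum (fun j => (measurable_const.indicator (hE j)).aemeasurable)]
    simp_rw [lintegral_indicator_const (hE _), one_mul]
  have hinf : ∀ᵐ x ∂μ, A.indicator (fun _ => (∞ : ℝ≥0∞)) x ≤ 
      ∑' j, (E j).indicator (fun _ => (1 : ℝ≥0∞)) x := by
    filter_upwards [hap] with x hx
    by_cases hxA : x ∈ A
    · rw [indicator_of_mem hxA]
      let V : Set ℕ := {j | x ∈ E j}
      have hV : V.Infinite := by
        intro hfin
        apply hx
        refine (hfin.image (fun j => g j • x)).subset ?_
        rintro _ ⟨h, rfl⟩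
        obtain ⟨j, rfl⟩ := hg h
        have hex : ∃ i, g i • x = g j • x := ⟨j, rfl⟩
        refine ⟨Nat.find hex, ⟨hxA, ?_⟩, Nat.find_spec hex⟩
        intro i hi h
        exact Nat.find_min hex hi (h.trans (Nat.find_spec hex))
      have h1 : ∀ j, (E j).indicator (fun _ => (1 : ℝ≥0∞)) x = V.indicator (fun _ => 1) j := by
        intro j
        simp [indicator_apply, V]
      simp_rw [h1]
      rw [← tsum_subtype V (fun _ => (1 : ℝ≥0∞))]
      haveI := hV.to_subtype
      rw [ENNReal.tsum_const_eq_top_of_ne_zero one_ne_zero]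
    · rw [indicator_of_notMem hxA]; exact zero_le
  have h2 := lintegral_mono_ae hinf
  rw [lintegral_indicator_const hA, ← h_intg] at h2
  by_contra hne
  rw [ENNReal.top_mul hne] at h2
  exact absurd (h2.trans hsum) (by simp)

lemma marker_lemma {G X : Type*} [Group G] [Countable G] [MulAction G X] 
    [mX : MeasurableSpace X] (μ : Measure X) [IsProbabilityMeasure μ] (hμ : IsPmp G μ)
    (hap : Aperiodic G μ) (B : ℕ → Set X) (hB : ∀ n, MeasurableSet (B n))
    (hsep : ∀ x y, (∀ n, x ∈ B n ↔ y ∈ B n) → x = y) (δ : ℝ≥0∞) (hδ : 0 < δ) : 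
    ∃ A : Set X, MeasurableSet A ∧ μ A < δ ∧ ∀ x, ∃ g : G, g • x ∈ A := by
  classical
  have hinv : InvariantAlg G mX := fun g A hA => (hμ g).measurable hA
  let A : ℕ → Set X := fun n => Nat.rec univ (fun n An => 
    (An ∩ B n) ∪ (An \ {x | ∃ g : G, g • x ∈ An ∩ B n})) n
  have hA0 : A 0 = univ := rfl
  have hAs : ∀ n, A (n+1) = (A n ∩ B n) ∪ (A n \ {x | ∃ g : G, g • x ∈ A n ∩ B n}) := fun n => rfl
  have hAm : ∀ n, MeasurableSet (A n) := by
    intro n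
    induction n with
    | zero => rw [hA0]; exact MeasurableSet.univ
    | succ n ih => 
      rw [hAs]
      exact (ih.inter (hB n)).union (ih.diff (measurableSet_sat hinv (ih.inter (hB n))))
  have hanti : Antitone A := by
    apply antitone_nat_of_succ_le
    intro n
    rw [hAs]
    rintro x (hx | hx)
    · exact hx.1
    · exact hx.1
  have hmeet : ∀ n x, ∃ g : G, g • x ∈ A n := by
    intro n
    induction n with
    | zero => intro x; exact ⟨1, trivial⟩
    | succ n ih => 
      intro x
      rw [hAs]
      rcases Classical.em (∃ g : G, (g • x : X) ∈ (A n ∩ B n : Set X)) with h | h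
      · obtain ⟨g, hg⟩ := h; exact ⟨g, Or.inl hg⟩
      · obtain ⟨g, hg⟩ := ih x
        refine ⟨g, Or.inr ⟨hg, ?_⟩⟩
        rintro ⟨k, hk⟩
        exact h ⟨k * g, by rwa [mul_smul]⟩
  have hnull : μ (⋂ n, A n) = 0 := by
    apply transversal_null μ hμ hap B hB hsep _ (MeasurableSet.iInter hAm)
    have key : ∀ x ∈ ⋂ n, A n, ∀ g : G, g • x ∈ ⋂ n, A n → ∀ n, x ∈ B n → g • x ∈ B n := by
      intro x hx g hgx n hxn
      by_contra hcon
      have h1 := mem_iInter.1 hgx (n+1)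
      rw [hAs] at h1
      rcases h1 with h1 | h1
      · exact hcon h1.2
      · exact h1.2 ⟨g⁻¹, by rw [inv_smul_smul]; exact ⟨mem_iInter.1 hx n, hxn⟩⟩
    intro x hx g hgx
    apply hsep
    intro n
    refine ⟨fun h => ?_, key x hx g hgx n⟩
    have := key (g • x) hgx g⁻¹ (by rwa [inv_smul_smul]) n h
    rwa [inv_smul_smul] at this
  have hlim := tendsto_measure_iInter_atTop (μ := μ) (s := A) 
    (fun n => (hAm n).nullMeasurableSet) hanti ⟨0, measure_ne_top _ _⟩
  rw [hnull] at hlim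
  obtain ⟨n, hn⟩ := (hlim.eventually (gt_mem_nhds hδ)).exists
  exact ⟨A n, hAm n, hn, hmeet n⟩

/-- An invariant finite-valued function can be replaced by a locally constant one, at the price of a
rarely non-trivial locally constant label. -/
def Cheap (G : Type*) {X Γ : Type*} (F : MeasurableSpace X) [Group G] [MulAction G X]
    [TopologicalSpace X] [mX : MeasurableSpace X] (μ : Measure X) (γ : X → Γ) : Prop :=
  ∀ ε : ℝ≥0∞, 0 < ε → ∃ (γh : X → Γ) (z : X → Option Γ), IsLocallyConstant γh ∧ 
    IsLocallyConstant z ∧ μ {x | γ x ≠ γh x} < ε ∧ μ {x | z x ≠ none} < ε ∧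
    (∀ M : MeasurableSpace X, InvariantAlg G M → F ⊔ @invSigma G X _ _ mX ≤ M →
      (∀ o, MeasurableSet[M] (z ⁻¹' {o})) → ∀ j, MeasurableSet[M] (γh ⁻¹' {j})) ∧
    ∀ j, MeasurableSet[F ⊔ invSigma G X] {x | γh x = j ∧ ∀ g : G, z (g • x) = none}

lemma approx_loc {X R : Type*} [TopologicalSpace X] [mX : MeasurableSpace X] 
    (hX : mX = MeasurableSpace.generateFrom {s | IsClopen s}) (μ : Measure X) [IsFiniteMeasure μ]
    [Finite R] [Nonempty R] (f : X → R) (hf : ∀ r, MeasurableSet (f ⁻¹' {r}))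
    (ε : ℝ≥0∞) (hε : 0 < ε) : ∃ (f' : X → R), IsLocallyConstant f' ∧ μ {x | f x ≠ f' x} < ε := by
  obtain ⟨J, f', hJ, hdep, hff⟩ := approx_fun μ {s | IsClopen s} 
    (fun s hs => by rw [hX]; exact MeasurableSpace.measurableSet_generateFrom hs) f 
    (fun r => ⟨f ⁻¹' {r}, by rw [← hX]; exact hf r, by simp⟩) ε hε
  let _ : TopologicalSpace R := ⊥
  haveI : DiscreteTopology R := ⟨rfl⟩
  refine ⟨f', ?_, hff⟩
  rw [IsLocallyConstant.iff_continuous]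
  exact hdep.continuous (fun j hj => hJ hj)

section
variable {G X Γ : Type*} (F : MeasurableSpace X) [Group G] [Countable G] [MulAction G X]
    [TopologicalSpace X] [mX : MeasurableSpace X] (μ : Measure X) [IsProbabilityMeasure μ] 
    [Finite Γ] (γ : X → Γ)

lemma cheap_ergodic (hγ : ∀ j, MeasurableSet (γ ⁻¹' {j})) (hγi : ∀ (g : G) x, γ (g • x) = γ x)
    (herg : IsErgodicInv G μ) : Cheap G F μ γ := by
  classical
  intro ε hε
  cases nonempty_fintype Γ
  obtain ⟨j, hj⟩ : ∃ j, μ (γ ⁻¹' {j}) ≠ 0 := by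
    by_contra hcon
    push Not at hcon
    have h1 : μ (⋃ j, γ ⁻¹' {j}) = 0 := measure_iUnion_null hcon
    have h2 : (⋃ j, γ ⁻¹' {j}) = univ := by ext x; simp
    rw [h2, measure_univ] at h1
    exact one_ne_zero h1
  have hj1 : μ (γ ⁻¹' {j}) = 1 := by
    refine (herg _ (hγ j) ?_).resolve_left hj
    intro g; ext x; simp [hγi]
  refine ⟨fun _ => j, fun _ => none, IsLocallyConstant.const j, IsLocallyConstant.const none, ?_, 
    by simpa using hε, ?_, ?_⟩
  · have : {x | γ x ≠ j} = (γ ⁻¹' {j})ᶜ := by ext x; simp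
    rw [this, prob_compl_eq_zero_iff (hγ j) |>.2 hj1]
    exact hε
  · intro M _ _ _ k
    by_cases h : j = k
    · simp [h]
    · simp [h]
  · intro k
    simp

lemma cheap_aperiodic (hX : mX = MeasurableSpace.generateFrom {s | IsClopen s})
    (hcont : ∀ g : G, Continuous (fun x : X => g • x)) (hμ : IsPmp G μ) (hap : Aperiodic G μ)
    (B : ℕ → Set X) (hB : ∀ n, MeasurableSet (B n))
    (hsep : ∀ x y, (∀ n, x ∈ B n ↔ y ∈ B n) → x = y)
    (hγ : ∀ j, MeasurableSet (γ ⁻¹' {j})) (hγi : ∀ (g : G) x, γ (g • x) = γ x) :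
    Cheap G F μ γ := by
  classical
  intro ε hε
  obtain ⟨x₀⟩ : Nonempty X := μ.nonempty_of_neZero
  haveI : Nonempty Γ := ⟨γ x₀⟩
  have hact : ∀ g : G, Measurable (fun x : X => g • x) := fun g => (hμ g).measurable
  have hinv : InvariantAlg G mX := fun g A hA => hact g hA
  obtain ⟨ε', hε'0, hε't⟩ : ∃ ε' : ℝ≥0∞, 0 < ε' ∧ ε' + ε' + ε' < ε := by
    obtain ⟨δ, hδ0, hδ⟩ := ENNReal.exists_nnreal_pos_mul_lt (a := 3) (by simp) hε.ne'
    refine ⟨δ, by exact_mod_cast hδ0, ?_⟩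
    calc _ = (δ : ℝ≥0∞) * 3 := by ring
      _ < ε := hδ
  obtain ⟨A, hA, hAδ, hAmeet⟩ := marker_lemma μ hμ hap B hB hsep ε' hε'0
  obtain ⟨g, hg⟩ := exists_surjective_nat G
  obtain ⟨K, hK⟩ : ∃ K : ℕ, μ {x | ∀ k < K, g k • x ∉ A} < ε' := by
    have hms : ∀ K : ℕ, MeasurableSet {x | ∀ k < K, g k • x ∉ A} := by
      intro K
      have : {x | ∀ k < K, g k • x ∉ A} = ⋂ k : Fin K, (fun x => g k • x) ⁻¹' Aᶜ := by
        ext x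
        simp only [mem_setOf_eq, mem_iInter, mem_preimage, mem_compl_iff]
        exact ⟨fun h k => h k k.2, fun h k hk => h ⟨k, hk⟩⟩
      rw [this]
      exact MeasurableSet.iInter (fun k => hact _ hA.compl)
    have hlim := tendsto_measure_iInter_atTop (μ := μ) (s := fun K : ℕ => {x | ∀ k < K, g k • x ∉ A})
      (fun n => (hms n).nullMeasurableSet) (fun K K' h x hx k hk => hx k (hk.trans_le h)) 
      ⟨0, measure_ne_top _ _⟩
    have hemp : ⋂ K : ℕ, {x | ∀ k < K, g k • x ∉ A} = ∅ := by
      ext x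
      simp only [mem_iInter, mem_setOf_eq, mem_empty_iff_false, iff_false]
      intro h
      obtain ⟨h', hh⟩ := hAmeet x
      obtain ⟨k, rfl⟩ := hg h'
      exact h (k+1) k (Nat.lt_succ_self k) hh
    rw [hemp, measure_empty] at hlim
    exact (hlim.eventually (gt_mem_nhds hε'0)).exists
  obtain ⟨η, hη0, hηK⟩ : ∃ η : ℝ≥0∞, 0 < η ∧ η * (K + 1) < ε' := by
    obtain ⟨δ, hδ0, hδ⟩ := ENNReal.exists_nnreal_pos_mul_lt (a := (K : ℝ≥0∞) + 1) (by finiteness) hε'0.ne'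
    exact ⟨δ, by exact_mod_cast hδ0, hδ⟩
  -- locally constant approximation of the pair
  obtain ⟨γ', hγ'loc, hγ'⟩ := approx_loc hX μ γ hγ η hη0
  obtain ⟨χ, hχloc, hχ⟩ := approx_loc hX μ (fun x => decide (x ∈ A)) (fun r => by
    cases r
    · have : (fun x => decide (x ∈ A)) ⁻¹' {false} = Aᶜ := by ext x; simp
      rw [this]; exact hA.compl
    · have : (fun x => decide (x ∈ A)) ⁻¹' {true} = A := by ext x; simp
      rw [this]; exact hA) η hη0
  let z : X → Option Γ := fun x => if χ x then some (γ' x) else none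
  have hzloc : IsLocallyConstant z := (hχloc.prodMk hγ'loc).comp 
    (fun p : Bool × Γ => if p.1 then some p.2 else none)
  let j0 : Γ := γ x₀
  let H : (Fin K → Option Γ) → Γ := fun v => if h : ∃ j, ∃ k, v k = some j then h.choose else j0
  let γh : X → Γ := fun x => H (fun k => z (g k • x))
  refine ⟨γh, z, ?_, hzloc, ?_, ?_, ?_, ?_⟩
  · have : IsLocallyConstant (fun x => (fun k : Fin K => z (g k • x))) := by
      rw [IsLocallyConstant.iff_eventually_eq]
      intro x
      have h1 : ∀ k : Fin K, ∀ᶠ y in nhds x, z (g k • y) = z (g k • x) := fun k =>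
        (IsLocallyConstant.iff_eventually_eq _).1 (hzloc.comp_continuous (hcont (g k))) x
      filter_upwards [Filter.eventually_all.2 h1] with y hy
      funext k; exact hy k
    exact this.comp H
  · have hsub : {x | γ x ≠ γh x} ⊆ {x | ∀ k < K, g k • x ∉ A} ∪ 
        ((⋃ k : Fin K, (fun x => g k • x) ⁻¹' {x | decide (x ∈ A) ≠ χ x}) ∪ 
        (⋃ k : Fin K, (fun x => g k • x) ⁻¹' {x | γ x ≠ γ' x})) := by
      intro x hx
      by_contra hcon
      apply hx
      simp only [mem_union, not_or, mem_iUnion, not_exists, mem_preimage, mem_setOf_eq, not_not,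
        not_forall] at hcon
      obtain ⟨⟨k, hk, hkA⟩, h2, h3⟩ := hcon
      have hzs : z (g k • x) = some (γ x) := by
        have h4 := h2 ⟨k, hk⟩
        have h5 := h3 ⟨k, hk⟩
        simp only at h4 h5
        simp only [z]
        rw [← h4, ← h5, hγi]
        simp [hkA]
      have hex : ∃ j, ∃ k : Fin K, z (g k • x) = some j := ⟨γ x, ⟨k, hk⟩, hzs⟩
      have hγh : γh x = hex.choose := by
        simp only [γh, H]
        rw [dif_pos hex]
      rw [hγh]
      obtain ⟨k', hk'⟩ := hex.choose_spec
      have h5 := h3 k'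
      simp only [z] at hk'
      split_ifs at hk'
      rw [← h5, hγi] at hk'
      exact Option.some.inj hk'
    have hun : ∀ V : Set X, MeasurableSet V → μ V < η → 
        μ (⋃ k : Fin K, (fun x => g k • x) ⁻¹' V) ≤ ε' := by
      intro V hV hVη
      calc _ ≤ ∑ k : Fin K, μ ((fun x => g k • x) ⁻¹' V) := measure_iUnion_fintype_le _ _
        _ = ∑ k : Fin K, μ V := by
          congr 1; funext k; exact (hμ (g k)).measure_preimage hV.nullMeasurableSet
        _ = K * μ V := by simp
        _ ≤ (K + 1) * η := by gcongr; exact le_self_add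
        _ ≤ ε' := by rw [mul_comm]; exact hηK.le
    have hclm : ∀ s : Set X, IsClopen s → MeasurableSet s := fun s hs => by 
      rw [hX]; exact MeasurableSpace.measurableSet_generateFrom hs
    have hm1 : MeasurableSet {x | decide (x ∈ A) ≠ χ x} := by
      have : {x | decide (x ∈ A) ≠ χ x} = (A ∩ χ ⁻¹' {true}ᶜ) ∪ (Aᶜ ∩ χ ⁻¹' {true}) := by
        ext x; by_cases h : x ∈ A <;> simp [h]
      rw [this]
      exact (hA.inter (hclm _ (hχloc.isClopen_fiber true).compl)).union 
        (hA.compl.inter (hclm _ (hχloc.isClopen_fiber true)))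
    have hm2 : MeasurableSet {x | γ x ≠ γ' x} := by
      have : {x | γ x ≠ γ' x} = (⋃ j : Γ, (γ ⁻¹' {j} ∩ γ' ⁻¹' {j}))ᶜ := by
        ext x; simp [eq_comm]
      rw [this]
      exact (MeasurableSet.iUnion (fun j => (hγ j).inter (hclm _ (hγ'loc.isClopen_fiber j)))).compl
    calc _ ≤ _ := measure_mono hsub
      _ ≤ μ {x | ∀ k < K, g k • x ∉ A} + 
        (μ (⋃ k : Fin K, (fun x => g k • x) ⁻¹' {x | decide (x ∈ A) ≠ χ x}) + 
        μ (⋃ k : Fin K, (fun x => g k • x) ⁻¹' {x | γ x ≠ γ' x})) := 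
          (measure_union_le _ _).trans (add_le_add le_rfl (measure_union_le _ _))
      _ ≤ ε' + (ε' + ε') := by
        gcongr
        · exact hun _ hm1 hχ
        · exact hun _ hm2 hγ'
      _ < ε := by rwa [← add_assoc]
  · have hsub : {x | z x ≠ none} ⊆ A ∪ {x | decide (x ∈ A) ≠ χ x} := by
      intro x hx
      simp only [z, mem_setOf_eq] at hx
      by_cases h : x ∈ A
      · exact Or.inl h
      · right
        by_contra hcon
        simp only [mem_setOf_eq, not_not] at hcon
        rw [← hcon] at hx
        simp [h] at hx
    calc _ ≤ _ := measure_mono hsub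
      _ ≤ μ A + μ {x | decide (x ∈ A) ≠ χ x} := measure_union_le _ _
      _ ≤ ε' + ε' := by
        gcongr
        refine hχ.le.trans (le_trans ?_ hηK.le)
        exact le_mul_of_one_le_right (zero_le) le_add_self
      _ ≤ ε' + ε' + ε' := le_self_add
      _ < ε := hε't
  · intro M hM _ hz j
    have h1 : γh ⁻¹' {j} = ⋃ v : {v : Fin K → Option Γ // H v = j}, 
        ⋂ k : Fin K, (fun x => g k • x) ⁻¹' (z ⁻¹' {v.1 k}) := by
      ext x
      simp only [mem_preimage, mem_singleton_iff, mem_iUnion, mem_iInter]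
      constructor
      · intro h; exact ⟨⟨_, h⟩, fun k => rfl⟩
      · rintro ⟨⟨v, hv⟩, h⟩
        have : (fun k : Fin K => z (g k • x)) = v := funext h
        simp only [γh, this]; exact hv
    rw [h1]
    exact MeasurableSet.iUnion (fun v => MeasurableSet.iInter (fun k => hM _ _ (hz _)))
  · intro j
    have hclm : MeasurableSet (z ⁻¹' {none}) := by 
      rw [hX]; exact MeasurableSpace.measurableSet_generateFrom (hzloc.isClopen_fiber none)
    have h1 : {x | γh x = j ∧ ∀ g : G, z (g • x) = none} = 
        {x | j0 = j} ∩ {x | ∀ g : G, g • x ∈ z ⁻¹' {none}} := by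
      ext x
      simp only [mem_setOf_eq, mem_inter_iff, mem_preimage, mem_singleton_iff]
      refine and_congr_left (fun h => ?_)
      have : γh x = j0 := by
        simp only [γh, H]
        rw [dif_neg]
        rintro ⟨j, k, hk⟩
        rw [h] at hk
        simp at hk
      rw [this]
    rw [h1]
    refine MeasurableSet.inter (MeasurableSet.const _) ?_
    exact (le_sup_right : invSigma G X ≤ F ⊔ invSigma G X) _ (measurableSet_forall_none hinv hclm)

end

lemma cheap_fg {G X Γ : Type*} (F : MeasurableSpace X) [Group G] [Countable G] [MulAction G X]
    [TopologicalSpace X] [mX : MeasurableSpace X] (μ : Measure X) [IsProbabilityMeasure μ] 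
    [Finite Γ] (γ : X → Γ) (hX : mX = MeasurableSpace.generateFrom {s | IsClopen s})
    (hcont : ∀ g : G, Continuous (fun x : X => g • x)) (hμ : IsPmp G μ) (hfg : Group.FG G)
    (hγ : ∀ j, MeasurableSet (γ ⁻¹' {j})) (hγi : ∀ (g : G) x, γ (g • x) = γ x) :
    Cheap G F μ γ := by
  classical
  intro ε hε
  obtain ⟨x₀⟩ : Nonempty X := μ.nonempty_of_neZero
  haveI : Nonempty Γ := ⟨γ x₀⟩
  have hact : ∀ g : G, Measurable (fun x : X => g • x) := fun g => (hμ g).measurable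
  have hinv : InvariantAlg G mX := fun g A hA => hact g hA
  obtain ⟨S0, hS0⟩ := hfg.out
  let S : Finset G := S0 ∪ S0.image (fun s => s⁻¹)
  have hSinv : ∀ s ∈ S, s⁻¹ ∈ S := by
    intro s hs
    simp only [S, Finset.mem_union, Finset.mem_image] at hs ⊢
    rcases hs with h | ⟨t, ht, rfl⟩
    · exact Or.inr ⟨s, h, rfl⟩
    · left; rwa [inv_inv]
  have hS : Subgroup.closure (S : Set G) = ⊤ := by
    rw [eq_top_iff, ← hS0]
    apply Subgroup.closure_mono
    intro s hs
    exact Finset.mem_coe.2 (Finset.mem_union_left _ hs)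
  obtain ⟨η, hη0, hηK⟩ : ∃ η : ℝ≥0∞, 0 < η ∧ η * (2 * S.card + 1) < ε := by
    obtain ⟨δ, hδ0, hδ⟩ := ENNReal.exists_nnreal_pos_mul_lt (a := 2 * (S.card : ℝ≥0∞) + 1) 
      (by finiteness) hε.ne'
    exact ⟨δ, by exact_mod_cast hδ0, hδ⟩
  obtain ⟨γ', hγ'loc, hγ'⟩ := approx_loc hX μ γ hγ η hη0
  have hclm : ∀ s : Set X, IsClopen s → MeasurableSet s := fun s hs => by 
    rw [hX]; exact MeasurableSpace.measurableSet_generateFrom hs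
  let C : Set X := {x | ∃ s ∈ S, γ' (s • x) ≠ γ' x}
  let z : X → Option Γ := fun x => if x ∈ C then some (γ' x) else none
  have hzloc : IsLocallyConstant z := by
    rw [IsLocallyConstant.iff_eventually_eq]
    intro x
    have h1 : ∀ s ∈ S, ∀ᶠ y in nhds x, γ' (s • y) = γ' (s • x) := fun s _ =>
      (IsLocallyConstant.iff_eventually_eq _).1 (hγ'loc.comp_continuous (hcont s)) x
    filter_upwards [(Filter.eventually_all_finset S).2 h1, 
      (IsLocallyConstant.iff_eventually_eq _).1 hγ'loc x] with y hy hy'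
    have : y ∈ C ↔ x ∈ C := by
      simp only [C, mem_setOf_eq]
      refine exists_congr (fun s => and_congr_right (fun hs => ?_))
      rw [hy s hs, hy']
    simp only [z, this, hy']
  have hm2 : MeasurableSet {x | γ x ≠ γ' x} := by
    have : {x | γ x ≠ γ' x} = (⋃ j : Γ, (γ ⁻¹' {j} ∩ γ' ⁻¹' {j}))ᶜ := by
      ext x; simp [eq_comm]
    rw [this]
    exact (MeasurableSet.iUnion (fun j => (hγ j).inter (hclm _ (hγ'loc.isClopen_fiber j)))).compl
  have hCnone : ∀ x, z x = none ↔ x ∉ C := by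
    intro x; by_cases h : x ∈ C <;> simp [z, h]
  have hCm : MeasurableSet C := by
    have : C = (z ⁻¹' {none})ᶜ := by
      ext x; simp [hCnone]
    rw [this]
    exact (hclm _ (hzloc.isClopen_fiber none)).compl
  have hEI : ∀ j, MeasurableSet[invSigma G X] {x | γ' x = j ∧ ∀ g : G, g • x ∉ C} := by
    intro j
    apply measurableSet_invSigma
    · have : {x | γ' x = j ∧ ∀ g : G, g • x ∉ C} = γ' ⁻¹' {j} ∩ ⋂ g : G, (fun x => g • x) ⁻¹' Cᶜ := by
        ext x; simp
      rw [this]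
      exact (hclm _ (hγ'loc.isClopen_fiber j)).inter (MeasurableSet.iInter fun g => hact g hCm.compl)
    · intro g
      have hg : g ∈ Subgroup.closure (S : Set G) := by rw [hS]; trivial
      have key : ∀ x, (∀ g : G, g • x ∉ C) → γ' (g • x) = γ' x := by
        induction hg using Subgroup.closure_induction with
        | mem s hs => 
          intro x hx
          have h1 : x ∉ C := by simpa using hx 1
          by_contra hne
          exact h1 ⟨s, hs, hne⟩
        | one => intro x _; simp
        | mul a b _ _ iha ihb => 
          intro x hx
          rw [mul_smul, iha _ (fun g => by rw [← mul_smul]; exact hx _), ihb x hx]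
        | inv a _ ih => 
          intro x hx
          have := ih (a⁻¹ • x) (fun g => by rw [← mul_smul]; exact hx _)
          rw [smul_inv_smul] at this
          exact this.symm
      ext x
      simp only [mem_preimage, mem_setOf_eq]
      constructor
      · rintro ⟨h1, h2⟩
        have h3 : ∀ k : G, k • x ∉ C := fun k => by simpa [mul_smul] using h2 (k * g⁻¹)
        exact ⟨by rw [← key x h3]; exact h1, h3⟩
      · rintro ⟨h1, h2⟩
        exact ⟨by rw [key x h2]; exact h1, fun k => by rw [← mul_smul]; exact h2 _⟩
  have hEeq : ∀ j, {x | γ' x = j ∧ ∀ g : G, z (g • x) = none} = 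
      {x | γ' x = j ∧ ∀ g : G, g • x ∉ C} := by
    intro j; simp only [hCnone]
  refine ⟨γ', z, hγ'loc, hzloc, ?_, ?_, ?_, ?_⟩
  · refine hγ'.trans (lt_of_le_of_lt ?_ hηK)
    exact le_mul_of_one_le_right (zero_le) le_add_self
  · have hsub : {x | z x ≠ none} ⊆ ⋃ s ∈ S, ((fun x => s • x) ⁻¹' {x | γ x ≠ γ' x} ∪ 
        {x | γ x ≠ γ' x}) := by
      intro x hx
      have hx' : x ∈ C := by
        by_contra h; exact hx ((hCnone x).2 h)
      obtain ⟨s, hs, hne⟩ := hx'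
      simp only [mem_iUnion]
      refine ⟨s, hs, ?_⟩
      by_contra hcon
      simp only [mem_union, mem_preimage, mem_setOf_eq, not_or, not_not] at hcon
      apply hne
      rw [← hcon.1, ← hcon.2, hγi]
    calc _ ≤ _ := measure_mono hsub
      _ ≤ ∑ s ∈ S, (μ ((fun x => s • x) ⁻¹' {x | γ x ≠ γ' x}) + μ {x | γ x ≠ γ' x}) := 
        (measure_biUnion_finset_le _ _).trans (Finset.sum_le_sum fun s _ => measure_union_le _ _)
      _ = ∑ s ∈ S, (μ {x | γ x ≠ γ' x} + μ {x | γ x ≠ γ' x}) := by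
        apply Finset.sum_congr rfl
        intro s _
        rw [(hμ s).measure_preimage hm2.nullMeasurableSet]
      _ ≤ ∑ s ∈ S, (η + η) := by gcongr
      _ = η * (2 * S.card) := by
        rw [Finset.sum_const, nsmul_eq_mul]; ring
      _ ≤ η * (2 * S.card + 1) := by gcongr; exact le_self_add
      _ < ε := hηK
  · intro M hM hle hzM j
    let R : ℕ → Set X := fun n => Nat.rec C (fun n Rn => Rn ∪ ⋃ s ∈ S, (fun x => s • x) ⁻¹' Rn) n
    have hR0 : R 0 = C := rfl
    have hRs : ∀ n, R (n+1) = R n ∪ ⋃ s ∈ S, (fun x => s • x) ⁻¹' (R n) := fun n => rfl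
    have hRC : ∀ n, C ⊆ R n := by
      intro n
      induction n with
      | zero => exact le_rfl
      | succ n ih => rw [hRs]; exact ih.trans subset_union_left
    have hRM : ∀ n, MeasurableSet[M] (R n) := by
      intro n
      induction n with
      | zero => 
        rw [hR0]
        have : C = (z ⁻¹' {none})ᶜ := by
          ext x; simp [hCnone]
        rw [this]
        exact (hzM none).compl
      | succ n ih => 
        rw [hRs]
        exact ih.union (Finset.measurableSet_biUnion _ (fun s _ => hM s _ ih))
    have hRγ : ∀ n, MeasurableSet[M] (γ' ⁻¹' {j} ∩ R n) := by
      intro n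
      induction n with
      | zero => 
        have : γ' ⁻¹' {j} ∩ R 0 = z ⁻¹' {some j} := by
          rw [hR0]
          ext x
          by_cases h : x ∈ C <;> simp [z, h]
        rw [this]
        exact hzM _
      | succ n ih => 
        have : γ' ⁻¹' {j} ∩ R (n+1) = (γ' ⁻¹' {j} ∩ R n) ∪ 
            ((R n)ᶜ ∩ ⋃ s ∈ S, (fun x => s • x) ⁻¹' (γ' ⁻¹' {j} ∩ R n)) := by
          rw [hRs]
          ext x
          have hinvx : x ∉ R n → ∀ s ∈ S, γ' (s • x) = γ' x := by
            intro hx s hs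
            by_contra hne
            exact hx (hRC n ⟨s, hs, hne⟩)
          simp only [mem_inter_iff, mem_union, mem_iUnion, mem_preimage, mem_singleton_iff, 
            mem_compl_iff, exists_prop]
          constructor
          · rintro ⟨h1, h2⟩
            rcases Classical.em (x ∈ (R n : Set X)) with h | h
            · exact Or.inl ⟨h1, h⟩
            · right
              obtain ⟨s, hs, hsx⟩ := h2.resolve_left h
              exact ⟨h, s, hs, by rw [hinvx h s hs]; exact h1, hsx⟩
          · rintro (h | ⟨h, s, hs, h1, h2⟩)
            · exact ⟨h.1, Or.inl h.2⟩
            · exact ⟨by rw [← hinvx h s hs]; exact h1, Or.inr ⟨s, hs, h2⟩⟩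
        rw [this]
        exact ih.union ((hRM n).compl.inter (Finset.measurableSet_biUnion _ (fun s _ => hM s _ ih)))
    have hout : ∀ x, (∀ n, x ∉ R n) → ∀ g : G, g • x ∉ C := by
      intro x hx g
      have hg : g ∈ Subgroup.closure (S : Set G) := by rw [hS]; trivial
      have key : ∀ x, (∀ n, x ∉ R n) ↔ (∀ n, g • x ∉ R n) := by
        have h1 : ∀ s ∈ S, ∀ x, (∀ n, x ∉ R n) → (∀ n, s • x ∉ R n) := by
          intro s hs x hx n hn
          apply hx (n+1)
          rw [hRs]
          right
          simp only [mem_iUnion]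
          exact ⟨s, hs, hn⟩
        induction hg using Subgroup.closure_induction with
        | mem s hs => 
          intro x
          refine ⟨h1 s hs x, fun h => ?_⟩
          have := h1 s⁻¹ (hSinv s hs) _ h
          simpa using this
        | one => intro x; simp
        | mul a b _ _ iha ihb => 
          intro x
          rw [ihb x, iha (b • x)]; simp only [mul_smul]
        | inv a _ ih => 
          intro x
          have := ih (a⁻¹ • x)
          rw [smul_inv_smul] at this
          exact this.symm
      exact (key x).1 hx 0
    have : γ' ⁻¹' {j} = {x | γ' x = j ∧ ∀ g : G, g • x ∉ C} ∪ ⋃ n, (γ' ⁻¹' {j} ∩ R n) := by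
      ext x
      simp only [mem_preimage, mem_singleton_iff, mem_union, mem_iUnion, mem_inter_iff, mem_setOf_eq]
      constructor
      · intro h
        rcases Classical.em (∃ n, x ∈ (R n : Set X)) with hx | hx
        · obtain ⟨n, hn⟩ := hx
          exact Or.inr ⟨n, h, hn⟩
        · left
          exact ⟨h, hout x (fun n hn => hx ⟨n, hn⟩)⟩
      · rintro (h | ⟨n, h, _⟩)
        · exact h.1
        · exact h
    rw [this]
    refine MeasurableSet.union (hle _ ?_) (MeasurableSet.iUnion hRγ)
    exact (le_sup_right : @invSigma G X _ _ mX ≤ F ⊔ @invSigma G X _ _ mX) _ (hEI j)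
  · intro j
    rw [hEeq]
    exact (le_sup_right : invSigma G X ≤ F ⊔ invSigma G X) _ (hEI j)

lemma isLocallyConstant_pi {X ι R : Type*} [TopologicalSpace X] [Finite ι] {f : X → ι → R}
    (h : ∀ i, IsLocallyConstant (fun x => f x i)) : IsLocallyConstant f := by
  rw [IsLocallyConstant.iff_eventually_eq]
  intro x
  have : ∀ᶠ y in nhds x, ∀ i, f y i = f x i := by
    rw [Filter.eventually_all]
    exact fun i => (IsLocallyConstant.iff_eventually_eq _).1 (h i) x
  filter_upwards [this] with y hy
  funext i; exact hy i

/-- Weight for the option alphabet: `none` has weight `1 - δ`. -/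
noncomputable def qopt (R : Type*) [Fintype R] (δ : ℝ) (o : Option R) : ℝ :=
  o.elim (1 - δ) (fun _ => δ / Fintype.card R)

lemma qopt_pos {R : Type*} [Fintype R] {δ : ℝ} (h0 : 0 < δ) (h1 : δ < 1) (o : Option R) :
    0 < qopt R δ o := by
  cases o with
  | none => simp [qopt, h1]
  | some r =>
    have : 0 < Fintype.card R := Fintype.card_pos_iff.2 ⟨r⟩
    simp only [qopt, Option.elim]; positivity

lemma qopt_sum {R : Type*} [Fintype R] {δ : ℝ} (h0 : 0 < δ) :
    ∑ o, qopt R δ o ≤ 1 := by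
  rw [Fintype.sum_option]
  simp only [qopt, Option.elim, Finset.sum_const, Finset.card_univ, nsmul_eq_mul]
  rcases Nat.eq_zero_or_pos (Fintype.card R) with h | h
  · rw [h]; simp; exact h0.le
  · have : (Fintype.card R : ℝ) ≠ 0 := by exact_mod_cast h.ne'
    field_simp; linarith

open Classical in
lemma qopt_bound {R : Type*} [Fintype R] {δ : ℝ} (h0 : 0 < δ) (h1 : δ < 1) (o : Option R) :
    -Real.log (qopt R δ o) ≤ -Real.log (1 - δ) + 
      (if o ≠ none then -Real.log (δ / Fintype.card R) else 0) := by
  cases o with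
  | none => simp [qopt]
  | some r =>
    have : Real.log (1 - δ) ≤ 0 := Real.log_nonpos (by linarith) (by linarith)
    simp [qopt]; linarith

/-- the cost function. -/
noncomputable def cost {X R Γ L : Type*} [Fintype Γ] [Fintype L] {N : ℕ} (κ δ Zk : ℝ) 
    (q : R → Γ → Fin N → ℝ) (a : X → Fin N) (f : X → R) (γh : X → Γ) (zc : X → Option Γ) 
    (E : Set X) (x : X) : ℝ :=
  (1 + κ) * (-Real.log (q (f x) (γh x) (a x))) + 2 * (-Real.log (1 - δ)) +
    {x | zc x ≠ none}.indicator (fun _ => -Real.log (δ / Fintype.card Γ) + Real.log Zk) x +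
    E.indicator (fun _ => -Real.log (δ / Fintype.card L) + Real.log Zk) x

lemma psi_meas {G X L Γ R : Type*} [Group G] [MulAction G X] [Finite Γ] [Finite R] {N : ℕ} 
    {M : MeasurableSpace X} (hM : InvariantAlg G M)
    (a : X → Fin N) (f : X → R) (γh : X → Γ) (T : Finset G) (ψ : (T → Fin N) → R → Γ → L)
    (ha : ∀ i, MeasurableSet[M] (a ⁻¹' {i}))
    (hf : ∀ i, MeasurableSet[M] (f ⁻¹' {i})) (hγ : ∀ i, MeasurableSet[M] (γh ⁻¹' {i})) (l : L) :
    MeasurableSet[M] {x | ψ (fun t => a (t.1 • x)) (f x) (γh x) = l} := by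
  let Y := ((T → Fin N) × R × Γ)
  have hc : ∀ y : Y, MeasurableSet[M] {x | (fun t : T => a (t.1 • x)) = y.1 ∧ f x = y.2.1 ∧ 
      γh x = y.2.2} := by
    intro y
    have e1 : MeasurableSet[M] {x | (fun t : T => a (t.1 • x)) = y.1} := by
      have : {x | (fun t : T => a (t.1 • x)) = y.1} = 
          ⋂ t : T, (fun x => t.1 • x) ⁻¹' (a ⁻¹' {y.1 t}) := by
        ext x
        simp only [mem_setOf_eq, mem_iInter, mem_preimage, mem_singleton_iff]
        exact ⟨fun h t => congrFun h t, fun h => funext h⟩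
      rw [this]
      exact MeasurableSet.iInter fun t => hM t.1 _ (ha _)
    exact e1.inter ((hf _).inter (hγ _))
  have : {x | ψ (fun t => a (t.1 • x)) (f x) (γh x) = l} = 
      ⋃ y ∈ {y : Y | ψ y.1 y.2.1 y.2.2 = l}, {x | (fun t : T => a (t.1 • x)) = y.1 ∧ 
        f x = y.2.1 ∧ γh x = y.2.2} := by
    ext x
    rw [mem_iUnion₂]
    constructor
    · intro h; exact ⟨(_, _, _), h, rfl, rfl, rfl⟩
    · rintro ⟨⟨b, r, j⟩, h, e1, e2, e3⟩
      subst e1 e2 e3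
      exact h
  rw [this]
  exact MeasurableSet.biUnion (Set.to_countable _) fun y _ => hc y

set_option maxHeartbeats 1000000 in
theorem rk_bound {G X L Γ R : Type*} (F : MeasurableSpace X) [Group G] [Countable G]
    [MulAction G X] [mX : MeasurableSpace X] (hFle : F ≤ mX) 
    (hFinv : InvariantAlg G F) (μ : Measure X) [IsProbabilityMeasure μ] (hμ : IsPmp G μ)
    [Fintype Γ] [Fintype L] [Finite R] {N : ℕ} (P : X → L) (hP : ∀ l, MeasurableSet (P ⁻¹' {l}))
    (hgen : ∀ M : MeasurableSpace X, InvariantAlg G M → (∀ l, MeasurableSet[M] (P ⁻¹' {l})) → 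
      mX ≤ M)
    (a : X → Fin N) (ha : ∀ i, MeasurableSet (a ⁻¹' {i}))
    (f : X → R) (hf : ∀ i, MeasurableSet[F] (f ⁻¹' {i}))
    (γh : X → Γ) (hγ : ∀ i, MeasurableSet (γh ⁻¹' {i}))
    (zc : X → Option Γ) (hzc : ∀ i, MeasurableSet (zc ⁻¹' {i}))
    (h1 : ∀ M : MeasurableSpace X, InvariantAlg G M → F ⊔ @invSigma G X _ _ mX ≤ M →
      (∀ o, MeasurableSet[M] (zc ⁻¹' {o})) → ∀ j, MeasurableSet[M] (γh ⁻¹' {j}))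
    (h2 : ∀ j, MeasurableSet[F ⊔ invSigma G X] {x | γh x = j ∧ ∀ g : G, zc (g • x) = none})
    (T : Finset G) (ψ : (T → Fin N) → R → Γ → L)
    (q : R → Γ → Fin N → ℝ) (hq : ∀ r r' k, 0 < q r r' k) (hqs : ∀ r r', ∑ k, q r r' k ≤ 1)
    (κ : ℝ) (hκ : 0 < κ) (Zk : ℝ) (hZk1 : 1 ≤ Zk)
    (hZk : ∑' n : ℕ, ENNReal.ofReal (((n : ℝ) + 1) ^ (-(1 + κ))) ≤ ENNReal.ofReal Zk)
    (κ' : ℝ) (hκ' : 0 < κ') (δ : ℝ) (hδ0 : 0 < δ) (hδ1 : δ < 1) :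
    rokhlin G F μ ≤ (∫⁻ x, ENNReal.ofReal (cost (L := L) κ δ Zk q a f γh zc 
      {x | P x ≠ ψ (fun t => a (t.1 • x)) (f x) (γh x)} x) ∂μ) + ENNReal.ofReal κ' := by
  classical
  set E : Set X := {x | P x ≠ ψ (fun t => a (t.1 • x)) (f x) (γh x)} with hE
  letI : MeasurableSpace (R × Γ) := ⊤
  letI : MeasurableSpace (Option Γ × Option L) := ⊤
  let u : X → Option L := fun x => if x ∈ E then some (P x) else none
  let z : X → Option Γ × Option L := fun x => (zc x, u x)
  let σ : X → R × Γ := fun x => (f x, γh x)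
  have hact : ∀ g : G, Measurable (fun x : X => g • x) := fun g => (hμ g).measurable
  have hinv : InvariantAlg G mX := fun g A hA => hact g hA
  -- ψ-part measurable
  have hψ : ∀ M : MeasurableSpace X, InvariantAlg G M → (∀ i, MeasurableSet[M] (a ⁻¹' {i})) →
      (∀ i, MeasurableSet[M] (f ⁻¹' {i})) → (∀ i, MeasurableSet[M] (γh ⁻¹' {i})) → 
      ∀ l, MeasurableSet[M] {x | ψ (fun t => a (t.1 • x)) (f x) (γh x) = l} := 
    fun M hM ha hf hγ l => psi_meas hM a f γh T ψ ha hf hγ l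
  have hEm : MeasurableSet E := by
    have : E = (⋃ l, P ⁻¹' {l} ∩ {x | ψ (fun t => a (t.1 • x)) (f x) (γh x) = l})ᶜ := by
      ext x
      simp only [hE, mem_setOf_eq, mem_compl_iff, mem_iUnion, mem_inter_iff, mem_preimage, 
        mem_singleton_iff, not_exists, not_and]
      constructor
      · rintro h l rfl h'; exact h h'.symm
      · intro h h'; exact h _ rfl h'.symm
    rw [this]
    exact (MeasurableSet.iUnion fun l => (hP l).inter 
      (hψ mX hinv ha (fun i => hFle _ (hf i)) hγ l)).compl
  have hu : ∀ o, MeasurableSet (u ⁻¹' {o}) := by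
    intro o
    cases o with
    | none => 
      have : u ⁻¹' {none} = Eᶜ := by ext x; simp only [u]; simp
      rw [this]; exact hEm.compl
    | some l =>
      have : u ⁻¹' {some l} = E ∩ P ⁻¹' {l} := by ext x; simp only [u]; simp
      rw [this]; exact hEm.inter (hP l)
  have hzM : ∀ M : MeasurableSpace X, (∀ o, MeasurableSet[M] (zc ⁻¹' {o})) → 
      (∀ o, MeasurableSet[M] (u ⁻¹' {o})) → Measurable[M] z := by
    intro M h h'
    refine meas_to_count fun t => ?_
    have : z ⁻¹' {t} = zc ⁻¹' {t.1} ∩ u ⁻¹' {t.2} := by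
      ext x; simp [z, Prod.ext_iff]
    rw [this]; exact (h _).inter (h' _)
  have hzM' : ∀ M : MeasurableSpace X, Measurable[M] z → (∀ o, MeasurableSet[M] (zc ⁻¹' {o})) ∧ 
      (∀ o, MeasurableSet[M] (u ⁻¹' {o})) := by
    intro M h
    refine ⟨fun o => ?_, fun o => ?_⟩
    · exact h (t := {p | p.1 = o}) trivial
    · exact h (t := {p | p.2 = o}) trivial
  have hσM : ∀ M : MeasurableSpace X, InvariantAlg G M →
      F ⊔ @invSigma G X _ _ mX ≤ M → Measurable[M] z → 
      (∀ i, MeasurableSet[M] (f ⁻¹' {i})) ∧ (∀ i, MeasurableSet[M] (γh ⁻¹' {i})) := by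
    intro M hM hle hz
    exact ⟨fun i => hle _ (le_sup_left (a := F) _ (hf i)), h1 M hM hle (hzM' M hz).1⟩
  obtain ⟨β, hβ, hβa, hβz, hβe⟩ := code_lemma F hFle hFinv μ hμ a 
    (meas_to_count ha) σ z (none, none) (hzM _ hzc hu) 
    (by
      intro M hM hle hz
      obtain ⟨h3, h4⟩ := hσM M hM hle hz
      refine meas_to_count fun t => ?_
      have : σ ⁻¹' {t} = f ⁻¹' {t.1} ∩ γh ⁻¹' {t.2} := by
        ext x; simp [σ, Prod.ext_iff]
      rw [this]; exact (h3 _).inter (h4 _))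
    (by
      intro j
      have : {x | σ x = j ∧ ∀ g : G, z (g • x) = (none, none)} = 
          (f ⁻¹' {j.1} ∩ {x | γh x = j.2 ∧ ∀ g : G, zc (g • x) = none}) ∩ 
            {x | ∀ g : G, g • x ∈ u ⁻¹' {none}} := by
        ext x
        simp only [σ, z, Prod.ext_iff, mem_setOf_eq, mem_inter_iff, mem_preimage, 
          mem_singleton_iff, forall_and]
        tauto
      rw [this]
      exact ((le_sup_left (a := F) _ (hf _)).inter (h2 _)).inter 
        (le_sup_right (a := F) _ (measurableSet_forall_none hinv (hu none))))
    (fun s k => q s.1 s.2 k) (fun s k => hq _ _ _) (fun s => hqs _ _) 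
    (fun t => qopt Γ δ t.1 * qopt L δ t.2) 
    (fun t => mul_pos (qopt_pos hδ0 hδ1 _) (qopt_pos hδ0 hδ1 _)) 
    (by
      rw [Fintype.sum_prod_type]
      simp_rw [← Finset.mul_sum]
      rw [← Finset.sum_mul]
      have e1 := qopt_sum (R := Γ) hδ0
      have e2 := qopt_sum (R := L) hδ0
      have e3 : 0 ≤ ∑ o, qopt L δ o := Finset.sum_nonneg fun o _ => (qopt_pos hδ0 hδ1 o).le
      nlinarith)
    κ hκ Zk hZk1 hZk κ' hκ'
  have hlZ : 0 ≤ Real.log Zk := Real.log_nonneg hZk1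
  refine le_trans (sInf_le ⟨β, hβ, ?_, rfl⟩) (hβe.trans ?_)
  · -- generating
    have hM0 : InvariantAlg G (sigmaG G (Set.range β) ⊔ F ⊔ invSigma G X) := 
      ((invariantAlg_sigmaG _).sup hFinv).sup (invariantAlg_invSigma)
    have hle0 : F ⊔ invSigma G X ≤ sigmaG G (Set.range β) ⊔ F ⊔ invSigma G X := 
      sup_le (le_sup_right.trans le_sup_left) le_sup_right
    set M := sigmaG G (Set.range β) ⊔ F ⊔ invSigma G X with hMdef
    have hM := hM0
    have hle := hle0
    obtain ⟨h3, h4⟩ := hσM M hM hle hβz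
    have h5 := (hzM' M hβz).2
    have h6 := hψ M hM (fun i => hβa (MeasurableSet.of_discrete)) h3 h4
    have h7 : ∀ l, MeasurableSet[M] (P ⁻¹' {l}) := by
      intro l
      have : P ⁻¹' {l} = u ⁻¹' {some l} ∪ 
          (u ⁻¹' {none} ∩ {x | ψ (fun t => a (t.1 • x)) (f x) (γh x) = l}) := by
        ext x
        rcases Classical.em (x ∈ E) with hx | hx
        · simp [u, hx]
        · have : P x = ψ (fun t => a (t.1 • x)) (f x) (γh x) := by
            simpa [hE] using hx
          simp [u, hx, this]
      rw [this]
      exact (h5 _).union ((h5 _).inter (h6 l))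
    have h8 := hgen M hM h7
    intro A hA
    exact ⟨A, h8 A hA, by simp⟩
  · gcongr with x
    simp only [cost, σ, z]
    rw [Real.log_mul (qopt_pos hδ0 hδ1 _).ne' (qopt_pos hδ0 hδ1 _).ne']
    have b1 := qopt_bound hδ0 hδ1 (zc x)
    have b2 := qopt_bound hδ0 hδ1 (u x)
    have b3 : (u x ≠ none) ↔ x ∈ E := by simp only [u]; simp
    rcases Classical.em (x ∈ E) with hx | hx <;> rcases Classical.em (zc x = none) with hx' | hx'
    · have : u x ≠ none := b3.2 hx
      simp only [this, hx', ne_eq, not_false_eq_true, if_true, not_true_eq_false, if_false, 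
        Prod.ext_iff, and_false, indicator, hx, mem_setOf_eq] at b1 b2 ⊢
      linarith
    · have : u x ≠ none := b3.2 hx
      simp only [this, hx', ne_eq, not_false_eq_true, if_true, not_true_eq_false, if_false, 
        Prod.ext_iff, and_false, indicator, hx, mem_setOf_eq] at b1 b2 ⊢
      linarith
    · have : u x = none := by by_contra h; exact hx (b3.1 h)
      simp only [this, hx', ne_eq, not_false_eq_true, if_true, not_true_eq_false, if_false, 
        Prod.ext_iff, and_self, indicator, hx, mem_setOf_eq] at b1 b2 ⊢
      linarith
    · have : u x = none := by by_contra h; exact hx (b3.1 h)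
      simp only [this, hx', ne_eq, not_false_eq_true, if_true, not_true_eq_false, if_false, 
        Prod.ext_iff, false_and, indicator, hx, mem_setOf_eq] at b1 b2 ⊢
      linarith

lemma measSet_ne {X R : Type*} [MeasurableSpace X] [Finite R] {f g : X → R} 
    (hf : ∀ r, MeasurableSet (f ⁻¹' {r})) (hg : ∀ r, MeasurableSet (g ⁻¹' {r})) :
    MeasurableSet {x | f x ≠ g x} := by
  have : {x | f x ≠ g x} = (⋃ r, f ⁻¹' {r} ∩ g ⁻¹' {r})ᶜ := by
    ext x
    simp only [mem_setOf_eq, mem_compl_iff, mem_iUnion, mem_inter_iff, mem_preimage, 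
        mem_singleton_iff, not_exists, not_and]
    constructor
    · rintro h l rfl h'; exact h h'.symm
    · intro h h'; exact h _ rfl h'.symm
  rw [this]
  exact (MeasurableSet.iUnion fun l => (hf l).inter (hg l)).compl

lemma cost_bound {X R Γ L : Type*} [MeasurableSpace X] (μ : Measure X) [IsProbabilityMeasure μ]
    [Fintype Γ] [Fintype L] {N : ℕ} (κ δ Zk : ℝ) (hκ : 0 < κ)
    (q : R → Γ → Fin N → ℝ) (Q : ℝ) (hQ : ∀ r r' k, -Real.log (q r r' k) ≤ Q)
    (a a' : X → Fin N) (f : X → R) (γ γh : X → Γ) (zc : X → Option Γ) (E : Set X)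
    (hA : MeasurableSet {x | a x ≠ a' x}) (hΓ : MeasurableSet {x | γ x ≠ γh x}) 
    (hzc : MeasurableSet {x | zc x ≠ none}) (hE : MeasurableSet E) :
    ∫⁻ x, ENNReal.ofReal (cost (L := L) κ δ Zk q a' f γh zc E x) ∂μ ≤ 
      ENNReal.ofReal (1 + κ) * (∫⁻ x, ENNReal.ofReal (-Real.log (q (f x) (γ x) (a x))) ∂μ + 
        ENNReal.ofReal Q * μ {x | γ x ≠ γh x} + ENNReal.ofReal Q * μ {x | a x ≠ a' x}) + 
      ENNReal.ofReal (2 * (-Real.log (1 - δ))) + 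
      ENNReal.ofReal (-Real.log (δ / Fintype.card Γ) + Real.log Zk) * μ {x | zc x ≠ none} + 
      ENNReal.ofReal (-Real.log (δ / Fintype.card L) + Real.log Zk) * μ E := by
  have hind : ∀ (s : Set X) (B : ℝ) (x : X), 
      ENNReal.ofReal (s.indicator (fun _ => B) x) = s.indicator (fun _ => ENNReal.ofReal B) x := by
    intro s B x
    rcases Classical.em (x ∈ s) with h | h <;> simp [h]
  calc _ ≤ ∫⁻ x, (ENNReal.ofReal (1 + κ) * (ENNReal.ofReal (-Real.log (q (f x) (γ x) (a x))) + 
        {x | γ x ≠ γh x}.indicator (fun _ => ENNReal.ofReal Q) x + 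
        {x | a x ≠ a' x}.indicator (fun _ => ENNReal.ofReal Q) x) + 
      ENNReal.ofReal (2 * (-Real.log (1 - δ))) + 
      {x | zc x ≠ none}.indicator 
        (fun _ => ENNReal.ofReal (-Real.log (δ / Fintype.card Γ) + Real.log Zk)) x +
      E.indicator (fun _ => ENNReal.ofReal (-Real.log (δ / Fintype.card L) + Real.log Zk)) x) ∂μ := by
        apply lintegral_mono
        intro x
        simp only [cost]
        refine ENNReal.ofReal_add_le.trans (add_le_add ?_ (hind _ _ _).le)
        refine ENNReal.ofReal_add_le.trans (add_le_add ?_ (hind _ _ _).le)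
        refine ENNReal.ofReal_add_le.trans (add_le_add ?_ le_rfl)
        rw [ENNReal.ofReal_mul (by linarith)]
        gcongr
        rcases Classical.em (γ x = γh x) with h | h
        · rcases Classical.em (a x = a' x) with h' | h'
          · rw [← h, ← h', add_assoc]; exact le_self_add
          · have : x ∈ {x | a x ≠ a' x} := h'
            rw [indicator_of_mem this]
            exact (ENNReal.ofReal_le_ofReal (hQ _ _ _)).trans le_add_self
        · have : x ∈ {x | γ x ≠ γh x} := h
          rw [indicator_of_mem this]
          refine (ENNReal.ofReal_le_ofReal (hQ _ _ _)).trans (le_trans ?_ le_self_add)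
          exact le_add_self
    _ = _ := by
        rw [lintegral_add_right _ (measurable_const.indicator hE), 
          lintegral_add_right _ (measurable_const.indicator hzc),
          lintegral_add_right _ measurable_const, lintegral_const_mul' _ _ (by simp),
          lintegral_add_right _ (measurable_const.indicator hA), 
          lintegral_add_right _ (measurable_const.indicator hΓ), 
          lintegral_indicator_const hE, lintegral_indicator_const hzc, 
          lintegral_indicator_const hΓ, lintegral_indicator_const hA]
        simp

lemma choose_e {r c : ℝ≥0∞} (h : r < c) : ∃ c1 : ℝ, 0 ≤ c1 ∧ r < ENNReal.ofReal c1 ∧ 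
    ∃ e : ℝ, 0 < e ∧ ENNReal.ofReal ((1 + e) * (c1 + e) + 4 * e) < c := by
  obtain ⟨s, hs, hsc⟩ := ENNReal.lt_iff_exists_nnreal_btwn.1 h
  obtain ⟨t, ht, htc⟩ := ENNReal.lt_iff_exists_nnreal_btwn.1 hsc
  have hst : (s : ℝ) < t := by exact_mod_cast ht
  have hs0 : (0 : ℝ) ≤ s := s.2
  refine ⟨s, hs0, by simpa using hs, min 1 ((t - s) / (s + 7)), 
    lt_min one_pos (div_pos (by linarith) (by linarith)), lt_of_le_of_lt ?_ htc⟩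
  rw [← ENNReal.ofReal_coe_nnreal]
  apply ENNReal.ofReal_le_ofReal
  set e := min 1 (((t : ℝ) - s) / (s + 7)) with he
  have e0 : 0 < e := lt_min one_pos (div_pos (by linarith) (by linarith))
  have e1 : e ≤ 1 := min_le_left _ _
  have e2 : e * (s + 7) ≤ t - s := by
    rw [← le_div_iff₀ (by linarith)]; exact min_le_right _ _
  nlinarith

lemma choose_Z (κ : ℝ) (hκ : 0 < κ) : ∃ Zk : ℝ, 1 ≤ Zk ∧ 
    ∑' n : ℕ, ENNReal.ofReal (((n : ℝ) + 1) ^ (-(1 + κ))) ≤ ENNReal.ofReal Zk := by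
  have hs : Summable (fun n : ℕ => ((n : ℝ) + 1) ^ (-(1 + κ))) := by
    have := (Real.summable_nat_rpow (p := -(1 + κ))).2 (by linarith)
    have := (summable_nat_add_iff 1).2 this
    simpa using this
  refine ⟨max 1 (∑' n : ℕ, ((n : ℝ) + 1) ^ (-(1 + κ))), le_max_left _ _, ?_⟩
  rw [← ENNReal.ofReal_tsum_of_nonneg (fun n => by positivity) hs]
  exact ENNReal.ofReal_le_ofReal (le_max_right _ _)

lemma weak_lt {X : Type*} [TopologicalSpace X] [CompactSpace X] [MeasurableSpace X] 
    [OpensMeasurableSpace X] (μ : ProbabilityMeasure X) (Θ : X → ℝ) (hΘ : Continuous Θ) (c : ℝ≥0∞)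
    (κ' : ℝ≥0∞) (h : ∫⁻ x, ENNReal.ofReal (Θ x) ∂(μ : Measure X) + κ' < c) :
    ∀ᶠ μ' : ProbabilityMeasure X in nhds μ, 
      ∫⁻ x, ENNReal.ofReal (Θ x) ∂(μ' : Measure X) + κ' < c := by
  let h' : BoundedContinuousFunction X NNReal := 
    BoundedContinuousFunction.mkOfCompact ⟨fun x => Real.toNNReal (Θ x), 
      continuous_real_toNNReal.comp hΘ⟩
  have h1 := (ProbabilityMeasure.tendsto_iff_forall_lintegral_tendsto (γ := ProbabilityMeasure X)
    (F := nhds μ) (μs := id) (μ := μ)).1 Filter.tendsto_id h'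
  have h2 : Filter.Tendsto (fun μ' : ProbabilityMeasure X => 
      ∫⁻ x, ENNReal.ofReal (Θ x) ∂(μ' : Measure X) + κ') (nhds μ) 
      (nhds (∫⁻ x, ENNReal.ofReal (Θ x) ∂(μ : Measure X) + κ')) := 
    Filter.Tendsto.add h1 tendsto_const_nhds
  exact h2.eventually (eventually_lt_nhds h)

lemma cost_cont {X R Γ L : Type*} [TopologicalSpace X] 
    [Fintype Γ] [Fintype L] {N : ℕ} (κ δ Zk : ℝ) (q : R → Γ → Fin N → ℝ) 
    {a : X → Fin N} {f : X → R} {γh : X → Γ} {zc : X → Option Γ} {E : Set X}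
    (ha : IsLocallyConstant a) (hf : IsLocallyConstant f) (hγ : IsLocallyConstant γh)
    (hz : IsLocallyConstant zc) (hE : IsLocallyConstant (fun x => x ∈ E)) :
    Continuous (cost (L := L) κ δ Zk q a f γh zc E) := by
  apply IsLocallyConstant.continuous
  rw [IsLocallyConstant.iff_eventually_eq] at *
  intro x
  filter_upwards [ha x, hf x, hγ x, hz x, hE x] with y h1 h2 h3 h4 h5
  simp only [cost, h1, h2, h3]
  have e1 : y ∈ {x | zc x ≠ none} ↔ x ∈ {x | zc x ≠ none} := by simp [h4]
  have e2 : y ∈ E ↔ x ∈ E := by rw [h5]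
  classical
  simp only [indicator, e1, e2]

lemma loc_meas {X R : Type*} [TopologicalSpace X] [mX : MeasurableSpace X] [OpensMeasurableSpace X]
    {f : X → R} (hf : IsLocallyConstant f) (r : R) : MeasurableSet (f ⁻¹' {r}) :=
  (hf.isOpen_fiber r).measurableSet

lemma err_bound {G X L Γ R : Type*} [Group G]
    [MulAction G X] [mX : MeasurableSpace X] (μ : Measure X) (hμ : IsPmp G μ)
    {N : ℕ} (P : X → L) (a a' : X → Fin N) (f : X → R) (γ γh : X → Γ)
    (T : Finset G) (ψ : (T → Fin N) → R → Γ → L) (hA : MeasurableSet {x | a x ≠ a' x}) :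
    μ {x | P x ≠ ψ (fun t => a' (t.1 • x)) (f x) (γh x)} ≤ 
      μ {x | P x ≠ ψ (fun t => a (t.1 • x)) (f x) (γ x)} + μ {x | γ x ≠ γh x} + 
        T.card * μ {x | a x ≠ a' x} := by
  have hsub : {x | P x ≠ ψ (fun t => a' (t.1 • x)) (f x) (γh x)} ⊆ 
      ({x | P x ≠ ψ (fun t => a (t.1 • x)) (f x) (γ x)} ∪ {x | γ x ≠ γh x}) ∪ 
        ⋃ t ∈ T, (fun x => t • x) ⁻¹' {x | a x ≠ a' x} := by
    intro x hx
    by_contra hcon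
    simp only [mem_union, mem_iUnion, mem_setOf_eq, mem_preimage, not_or, not_not, 
      not_exists] at hcon hx
    obtain ⟨⟨h1, h2⟩, h3⟩ := hcon
    apply hx
    have : (fun t : T => a' (t.1 • x)) = fun t => a (t.1 • x) := by
      funext t; exact (h3 t.1 t.2).symm
    rw [this, ← h2]; exact h1
  refine (measure_mono hsub).trans ((measure_union_le _ _).trans 
    (add_le_add (measure_union_le _ _) ?_))
  refine (measure_biUnion_finset_le _ _).trans ?_
  rw [← nsmul_eq_mul, ← Finset.sum_const]
  exact Finset.sum_le_sum fun t _ => ((hμ t).measure_preimage hA.nullMeasurableSet).le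

lemma arith_aux (e c1 Q B1 B2 t D ε : ℝ) (he : 0 < e) (hc10 : 0 ≤ c1) (hQ0 : 0 ≤ Q) 
    (hB10 : 0 ≤ B1) (hB20 : 0 ≤ B2) (ht : 0 ≤ t) (hε0 : 0 < ε) 
    (hD : D = 1 + B1 + 2 * Q + B2 * (1 + t)) (hεD : ε * D = e / 3) :
    ENNReal.ofReal (1 + e) * (ENNReal.ofReal c1 + ENNReal.ofReal Q * ENNReal.ofReal ε + 
            ENNReal.ofReal Q * ENNReal.ofReal ε) + ENNReal.ofReal e + 
            ENNReal.ofReal B1 * ENNReal.ofReal ε + 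
            ENNReal.ofReal B2 * ENNReal.ofReal (e / (3 * (B2 + 1)) + ε + t * ε) + 
            ENNReal.ofReal e ≤ ENNReal.ofReal ((1 + e) * (c1 + e) + 4 * e) := by
  have m1 : 0 ≤ B1 * ε := by positivity
  have m2 : 0 ≤ Q * ε := by positivity
  have m3 : 0 ≤ B2 * (ε + t * ε) := by positivity
  have n3 : 0 ≤ e / (3 * (B2 + 1)) + ε + t * ε := by positivity
  have n4 : 0 ≤ (1 + e) * (c1 + Q * ε + Q * ε) := by positivity
  have n5 : 0 ≤ B2 * (e / (3 * (B2 + 1)) + ε + t * ε) := by positivity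
  have heq : ENNReal.ofReal ((1 + e) * (c1 + Q * ε + Q * ε) + e + B1 * ε + 
      B2 * (e / (3 * (B2 + 1)) + ε + t * ε) + e) = 
      ENNReal.ofReal (1 + e) * (ENNReal.ofReal c1 + ENNReal.ofReal Q * ENNReal.ofReal ε + 
            ENNReal.ofReal Q * ENNReal.ofReal ε) + ENNReal.ofReal e + 
            ENNReal.ofReal B1 * ENNReal.ofReal ε + 
            ENNReal.ofReal B2 * ENNReal.ofReal (e / (3 * (B2 + 1)) + ε + t * ε) + 
            ENNReal.ofReal e := by
    rw [ENNReal.ofReal_add (by linarith) he.le, ENNReal.ofReal_add (by linarith) n5,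
      ENNReal.ofReal_add (by linarith) m1, ENNReal.ofReal_add n4 he.le,
      ENNReal.ofReal_mul (p := 1 + e) (by linarith), ENNReal.ofReal_add (by linarith) m2,
      ENNReal.ofReal_add hc10 m2, ENNReal.ofReal_mul hQ0, ENNReal.ofReal_mul hB10, 
      ENNReal.ofReal_mul hB20]
  rw [← heq]
  apply ENNReal.ofReal_le_ofReal
  have hexp : B1 * ε + Q * ε + Q * ε + B2 * (ε + t * ε) ≤ e / 3 := by
    rw [← hεD, hD]; linarith
  have hfr : B2 * (e / (3 * (B2 + 1))) ≤ e / 3 := by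
    rw [mul_div_assoc', div_le_div_iff₀ (by positivity) (by norm_num)]
    linarith
  have m4 : (1 + e) * (c1 + Q * ε + Q * ε) ≤ (1 + e) * (c1 + e) := by
    apply mul_le_mul_of_nonneg_left _ (by linarith)
    linarith
  have m5 : B2 * (e / (3 * (B2 + 1)) + ε + t * ε) = 
    B2 * (e / (3 * (B2 + 1))) + B2 * (ε + t * ε) := by ring
  rw [m5]
  linarith

set_option maxHeartbeats 1000000 in
theorem core {G X L : Type*} (F : MeasurableSpace X) [Group G] [Countable G]
    [MulAction G X] [TopologicalSpace X] [CompactSpace X] [mX : MeasurableSpace X] [BorelSpace X] 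
    (hX : mX = MeasurableSpace.generateFrom {s | IsClopen s})
    (hcont : ∀ g : G, Continuous (fun x : X => g • x)) 
    (hFle : F ≤ mX) (hFinv : InvariantAlg G F) (C : Set (Set X)) (hC : ∀ A ∈ C, IsClopen A)
    (hF : F = MeasurableSpace.generateFrom C) [Fintype L] (P : X → L) (hP : IsLocallyConstant P)
    (hgen : ∀ M : MeasurableSpace X, InvariantAlg G M → (∀ l, MeasurableSet[M] (P ⁻¹' {l})) → 
      mX ≤ M)
    (μ : ProbabilityMeasure X) (hμ : IsPmp G (μ : Measure X))
    (hcheap : ∀ K : Finset (Set X), 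
      (∀ s ∈ K, MeasurableSet s ∧ ∀ g : G, (fun x => g • x) ⁻¹' s = s) → 
      Cheap G F (μ : Measure X) (pat K))
    (c : ℝ≥0∞) (hc : rokhlin G F (μ : Measure X) < c) :
    ∀ᶠ μ' : ProbabilityMeasure X in nhds μ, IsPmp G (μ' : Measure X) → 
      rokhlin G F (μ' : Measure X) < c := by
  classical
  letI : MeasurableSpace L := ⊤
  obtain ⟨c1, hc10, hc1, e, he, hce⟩ := choose_e hc
  obtain ⟨Zk, hZk1, hZk⟩ := choose_Z e he
  obtain ⟨δ, hδ0, hδ1, hδ⟩ : ∃ δ : ℝ, 0 < δ ∧ δ < 1 ∧ 2 * (-Real.log (1 - δ)) ≤ e := by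
    refine ⟨1 - Real.exp (-(e / 2)), ?_, ?_, ?_⟩
    · have : Real.exp (-(e / 2)) < 1 := by
        rw [← Real.exp_zero]; exact Real.exp_lt_exp.2 (by linarith)
      linarith
    · linarith [Real.exp_pos (-(e / 2))]
    · rw [sub_sub_cancel, Real.log_exp]; linarith
  set B2 : ℝ := |(-Real.log (δ / Fintype.card L) + Real.log Zk)| with hB2
  have hB20 : 0 ≤ B2 := abs_nonneg _
  have hact : ∀ g : G, Measurable (fun x : X => g • x) := fun g => (hμ g).measurable
  obtain ⟨N, a, J, K, T, ψ, q, ha, hJ, hK, hE0, hq, hqs, hqint⟩ := finite_data F C 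
    (fun A hA => (hC A hA).isOpen.measurableSet) hF hact (μ : Measure X) P (meas_to_count (loc_meas hP)) 
    (ENNReal.ofReal c1) hc1 (ENNReal.ofReal (e / (3 * (B2 + 1)))) 
    (by rw [ENNReal.ofReal_pos]; positivity)
  obtain ⟨x₀⟩ : Nonempty X := (μ : Measure X).nonempty_of_neZero
  haveI : Nonempty (Fin N) := ⟨a x₀⟩
  set B1 : ℝ := |(-Real.log (δ / Fintype.card (K → Bool)) + Real.log Zk)| with hB1
  have hB10 : 0 ≤ B1 := abs_nonneg _
  obtain ⟨Q, hQ0, hQ⟩ : ∃ Q : ℝ, 0 ≤ Q ∧ ∀ r r' k, -Real.log (q r r' k) ≤ Q := by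
    refine ⟨∑ t : (J → Bool) × (K → Bool) × Fin N, |Real.log (q t.1 t.2.1 t.2.2)|, 
      Finset.sum_nonneg fun _ _ => abs_nonneg _, fun r r' k => ?_⟩
    exact (neg_le_abs _).trans (Finset.single_le_sum 
      (f := fun t : (J → Bool) × (K → Bool) × Fin N => |Real.log (q t.1 t.2.1 t.2.2)|) 
      (fun _ _ => abs_nonneg _) (Finset.mem_univ (r, r', k)))
  set D : ℝ := 1 + B1 + 2 * Q + B2 * (1 + T.card) with hD
  have hT0 : (0 : ℝ) ≤ T.card := Nat.cast_nonneg _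
  have hBT : 0 ≤ B2 * (1 + T.card) := by positivity
  have hD0 : 0 < D := by linarith
  set ε : ℝ := e / (3 * D) with hε
  have hε0 : 0 < ε := by positivity
  have hεD : ε * D = e / 3 := by rw [hε]; field_simp
  obtain ⟨γh, zc, hγh, hzc, hγγ, hzε, h1, h2⟩ := hcheap K hK (ENNReal.ofReal ε) 
    (by rwa [ENNReal.ofReal_pos])
  obtain ⟨a', ha', haa⟩ := approx_loc hX (μ : Measure X) a (fun r => ha (MeasurableSet.of_discrete)) 
    (ENNReal.ofReal ε) (by rwa [ENNReal.ofReal_pos])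
  have hfl : IsLocallyConstant (pat J) := by
    letI : TopologicalSpace (J → Bool) := ⊥
    haveI : DiscreteTopology (J → Bool) := ⟨rfl⟩
    rw [IsLocallyConstant.iff_continuous]
    refine DepOn.continuous (J := J) (fun x y h => pat_eq_iff.2 h) (fun j hj => hC _ (hJ hj))
  have hfF : ∀ i, MeasurableSet[F] (pat J ⁻¹' {i}) := by
    letI : MeasurableSpace (J → Bool) := ⊤
    have : Measurable[F] (pat J) := DepOn.measurable (J := J) (fun x y h => pat_eq_iff.2 h) 
      (fun j hj => by rw [hF]; exact MeasurableSpace.measurableSet_generateFrom (hJ hj))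
    intro i
    exact this (t := {i}) trivial
  have hγm : ∀ i, MeasurableSet (pat K ⁻¹' {i}) := by
    letI : MeasurableSpace (K → Bool) := ⊤
    have : Measurable (pat K) := DepOn.measurable (J := K) (fun x y h => pat_eq_iff.2 h) 
      (fun j hj => (hK j hj).1)
    intro i
    exact this (t := {i}) trivial
  have hA : MeasurableSet {x | a x ≠ a' x} := 
    measSet_ne (fun r => ha (MeasurableSet.of_discrete)) (loc_meas ha')
  have hΓ : MeasurableSet {x | pat K x ≠ γh x} := measSet_ne hγm (loc_meas hγh)
  set E : Set X := {x | P x ≠ ψ (fun t => a' (t.1 • x)) (pat J x) (γh x)} with hE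
  have hEl : IsLocallyConstant (fun x => x ∈ E) := by
    have h3 : IsLocallyConstant (fun x (t : T) => a' (t.1 • x)) := 
      isLocallyConstant_pi fun t => ha'.comp_continuous (hcont t.1)
    rw [IsLocallyConstant.iff_eventually_eq] at *
    intro x
    filter_upwards [h3 x, hfl x, hγh x, hP x] with y h1 h2 h3 h4
    simp only [hE, mem_setOf_eq]
    rw [h1, h2, h3, h4]
  have hEm : MeasurableSet E := by
    have := loc_meas hEl True
    convert this using 1
    ext x; simp
  have hzm : MeasurableSet {x | zc x ≠ none} := 
    (loc_meas hzc none).compl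
  have hμE := err_bound (μ : Measure X) hμ P a a' (pat J) (pat K) γh T ψ hA
  have hcb := cost_bound (L := L) (μ : Measure X) e δ Zk he q Q hQ a a' (pat J) (pat K) γh zc E hA hΓ 
    hzm hEm
  have hmain : ∫⁻ x, ENNReal.ofReal (cost (L := L) e δ Zk q a' (pat J) γh zc E x) ∂(μ : Measure X) + 
      ENNReal.ofReal e < c := by
    refine lt_of_le_of_lt ?_ hce
    have k1 : (μ : Measure X) E ≤ ENNReal.ofReal (e / (3 * (B2 + 1)) + ε + T.card * ε) := by
      rw [ENNReal.ofReal_add (by positivity) (by positivity), 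
        ENNReal.ofReal_add (by positivity) (by positivity), ENNReal.ofReal_mul (by positivity),
        ENNReal.ofReal_natCast]
      exact hμE.trans (add_le_add (add_le_add hE0.le hγγ.le) (by gcongr))
    calc _ ≤ ENNReal.ofReal (1 + e) * (ENNReal.ofReal c1 + ENNReal.ofReal Q * ENNReal.ofReal ε + 
            ENNReal.ofReal Q * ENNReal.ofReal ε) + ENNReal.ofReal e + 
            ENNReal.ofReal B1 * ENNReal.ofReal ε + 
            ENNReal.ofReal B2 * ENNReal.ofReal (e / (3 * (B2 + 1)) + ε + T.card * ε) + 
            ENNReal.ofReal e := by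
          refine add_le_add (hcb.trans ?_) le_rfl
          gcongr
          · exact le_abs_self _
          · exact le_abs_self _
      _ ≤ _ := arith_aux e c1 Q B1 B2 T.card D ε he hc10 hQ0 hB10 hB20 hT0 hε0 hD hεD
  filter_upwards [weak_lt μ _ (cost_cont (L := L) e δ Zk q ha' hfl hγh hzc hEl) c _ hmain] 
    with μ' hμ' hpmp
  refine lt_of_le_of_lt ?_ hμ'
  exact rk_bound F hFle hFinv (μ' : Measure X) hpmp P (loc_meas hP) hgen a' (loc_meas ha') (pat J) hfF
    γh (loc_meas hγh) zc (loc_meas hzc) h1 h2 T ψ q hq hqs e he Zk hZk1 hZk e he δ hδ0 hδ1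

/-- invariant patterns -/
lemma pat_inv {G X : Type*} [Group G] [MulAction G X] (K : Finset (Set X)) 
    (hK : ∀ s ∈ K, ∀ g : G, (fun x => g • x) ⁻¹' s = s) (g : G) (x : X) : 
    pat K (g • x) = pat K x := by
  rw [pat_eq_iff]
  intro j hj
  have := hK j hj g
  exact ⟨fun h => by rw [← this]; exact h, fun h => by rw [← this] at h; exact h⟩

lemma pat_meas {X : Type*} [MeasurableSpace X] (K : Finset (Set X)) 
    (hK : ∀ s ∈ K, MeasurableSet s) (i) : MeasurableSet (pat K ⁻¹' {i}) := by
  letI : MeasurableSpace (K → Bool) := ⊤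
  have : Measurable (pat K) := DepOn.measurable (J := K) (fun x y h => pat_eq_iff.2 h) hK
  exact this (t := {i}) trivial

section shift
variable {G L : Type*} [Group G] [Countable G] [Fintype L] [TopologicalSpace L] [DiscreteTopology L]
  
lemma coord_clopen (h : G) (l : L) : IsClopen {x : G → L | x h = l} :=
  (isClopen_discrete {l}).preimage (continuous_apply h)

lemma shift_gen [mGL : MeasurableSpace (G → L)] [BorelSpace (G → L)] (M : MeasurableSpace (G → L))
    (hM : ∀ h l, MeasurableSet[M] {x : G → L | x h = l}) : mGL ≤ M := by
  letI : MeasurableSpace L := borel L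
  haveI : BorelSpace L := ⟨rfl⟩
  haveI : DiscreteMeasurableSpace L := ⟨fun s => (isOpen_discrete s).measurableSet⟩
  have h1 : mGL = MeasurableSpace.pi := by
    rw [@BorelSpace.measurable_eq (G → L) _ mGL _]
    exact (@BorelSpace.measurable_eq (G → L) _ MeasurableSpace.pi Pi.borelSpace).symm
  rw [h1]
  refine iSup_le fun h => ?_
  rw [MeasurableSpace.comap_le_iff_le_map]
  intro s _
  change MeasurableSet[M] ((fun x : G → L => x h) ⁻¹' s)
  have : (fun x : G → L => x h) ⁻¹' s = ⋃ l ∈ s, {x : G → L | x h = l} := by ext x; simp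
  rw [this]
  exact MeasurableSet.biUnion (Set.to_countable s) fun l _ => hM h l

lemma shift_cont (g : G) : Continuous (fun x : G → L => g • x) :=
  continuous_pi fun h => continuous_apply (g⁻¹ * h)

end shift

/-- Corollary 5.6.(ii): on the space of invariant Borel probability
measures on `L^G` with the weak* topology, the relative Rokhlin entropy
`μ ↦ rh_G(L^G, μ | F)` is upper-semicontinuous on the aperiodic and the ergodic invariant
measures; if `G` is finitely generated it is upper-semicontinuous on all invariant
measures. -/
theorem statement14 {G L : Type*} (F : MeasurableSpace (G → L)) [Group G] [Countable G]
    [Fintype L] [TopologicalSpace L] [DiscreteTopology L]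
    [mGL : MeasurableSpace (G → L)] [BorelSpace (G → L)]
    (hFle : F ≤ mGL) (hFinv : InvariantAlg G F)
    (hFgen : ∃ C : Set (Set (G → L)), C.Countable ∧ (∀ A ∈ C, IsClopen A) ∧
      F = MeasurableSpace.generateFrom C) :
    UpperSemicontinuousOn
        (fun μ : ProbabilityMeasure (G → L) => rokhlin G F (μ : Measure (G → L)))
        ({μ : ProbabilityMeasure (G → L) |
            IsPmp G (μ : Measure (G → L)) ∧ Aperiodic G (μ : Measure (G → L))} ∪
          {μ : ProbabilityMeasure (G → L) |
            IsPmp G (μ : Measure (G → L)) ∧ IsErgodicInv G (μ : Measure (G → L))}) ∧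
      (Group.FG G →
        UpperSemicontinuousOn
          (fun μ : ProbabilityMeasure (G → L) => rokhlin G F (μ : Measure (G → L)))
          {μ : ProbabilityMeasure (G → L) | IsPmp G (μ : Measure (G → L))}) := by
  classical
  obtain ⟨C, -, hC, hF⟩ := hFgen
  have hX : mGL = MeasurableSpace.generateFrom {s : Set (G → L) | IsClopen s} := by
    apply le_antisymm
    · exact shift_gen _ fun h l => MeasurableSpace.measurableSet_generateFrom (coord_clopen h l)
    · exact MeasurableSpace.generateFrom_le fun s hs => 
        (show IsClopen s from hs).isOpen.measurableSet
  have hcont : ∀ g : G, Continuous (fun x : G → L => g • x) := fun g => shift_cont g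
  have hP : IsLocallyConstant (fun x : G → L => x 1) := by
    rw [IsLocallyConstant.iff_continuous]; exact continuous_apply 1
  have hgen : ∀ M : MeasurableSpace (G → L), InvariantAlg G M → 
      (∀ l, MeasurableSet[M] ((fun x : G → L => x 1) ⁻¹' {l})) → mGL ≤ M := by
    intro M hM h
    refine shift_gen (mGL := mGL) M fun k l => ?_
    have h1 := hM k⁻¹ _ (h l)
    have h2 : {x : G → L | x k = l} = 
        (fun x : G → L => k⁻¹ • x) ⁻¹' ((fun x : G → L => x 1) ⁻¹' {l}) := by
      ext x
      change x k = l ↔ x (k⁻¹⁻¹ * 1) = l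
      simp
    rw [h2]; exact h1
  have key : ∀ (μ : ProbabilityMeasure (G → L)), IsPmp G (μ : Measure (G → L)) → 
      (Aperiodic G (μ : Measure (G → L)) ∨ IsErgodicInv G (μ : Measure (G → L)) ∨ Group.FG G) → 
      ∀ c, rokhlin G F (μ : Measure (G → L)) < c → 
      ∀ᶠ μ' : ProbabilityMeasure (G → L) in nhds μ, IsPmp G (μ' : Measure (G → L)) → 
        rokhlin G F (μ' : Measure (G → L)) < c := by
    intro μ hμ hor c hc
    refine core F hX hcont hFle hFinv C hC hF (fun x => x 1) hP hgen μ hμ ?_ c hc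
    intro K hK
    have hm := pat_meas K (fun s hs => (hK s hs).1)
    have hi := pat_inv (G := G) K (fun s hs => (hK s hs).2)
    rcases hor with hap | herg | hfg
    · obtain ⟨x₀⟩ : Nonempty (G → L) := (μ : Measure (G → L)).nonempty_of_neZero
      haveI : Nonempty L := ⟨x₀ 1⟩
      obtain ⟨en, hen⟩ := exists_surjective_nat (G × L)
      refine cheap_aperiodic F (μ : Measure (G → L)) (pat K) hX hcont hμ hap 
        (fun n => {x | x (en n).1 = (en n).2}) 
        (fun n => (coord_clopen _ _).isOpen.measurableSet) ?_ hm hi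
      intro x y hxy
      funext k
      obtain ⟨n, hn⟩ := hen (k, y k)
      have := hxy n
      simp only [hn, mem_setOf_eq] at this
      exact this.2 trivial
    · exact cheap_ergodic F (μ : Measure (G → L)) (pat K) hm hi herg
    · exact cheap_fg F (μ : Measure (G → L)) (pat K) hX hcont hμ hfg hm hi
  constructor
  · intro μ hμ c hc
    have h1 : ∀ᶠ μ' : ProbabilityMeasure (G → L) in nhds μ, IsPmp G (μ' : Measure (G → L)) → 
        rokhlin G F (μ' : Measure (G → L)) < c := by
      rcases hμ with ⟨h1, h2⟩ | ⟨h1, h2⟩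
      · exact key μ h1 (Or.inl h2) c hc
      · exact key μ h1 (Or.inr (Or.inl h2)) c hc
    filter_upwards [mem_nhdsWithin_of_mem_nhds h1, self_mem_nhdsWithin] with μ' h2 h3
    exact h2 (h3.elim (fun h => h.1) (fun h => h.1))
  · intro hfg μ hμ c hc
    have h1 := key μ hμ (Or.inr (Or.inr hfg)) c hc
    filter_upwards [mem_nhdsWithin_of_mem_nhds h1, self_mem_nhdsWithin] with μ' h2 h3
    exact h2 h3
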